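/- arXiv:2202.06949 — 6 statements merged into one kernel-verified Lean document; each statement's English description precedes it below -/
import Mathlib

section
/- Fix an integer k ≥ 1 and let Q_k be the set of all rationals in [0,1] whose reduced denominator is at most k. If q1, q2 ∈ Q_k satisfy q1 < q2 and no element of Q_k lies strictly between q1 and q2, then q1 and q2 are adjacent: writing q1 = l1/k1 and q2 = l2/k2 in lowest terms, l2·k1 − l1·k2 = 1. -/
/-!
Write `q1 = l1 / k1` in lowest terms. Among the rationals `r` with `fareyDet q1 r = 1` there is one
whose denominator is at most `k` but larger than `k - k1`. It lies to the right of `q1`, hence not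
to the left of `q2`. If it lay strictly to the right of `q2`, then `q2` would be strictly between
two adjacent fractions, so its denominator would be at least the sum of theirs, which exceeds `k`.
So `r = q2`.
-/

/-- The determinant `l2 * k1 - l1 * k2` of `q = l1 / k1` and `r = l2 / k2` in lowest terms. The
fractions are adjacent, as in the theory of Farey sequences, when it equals `1`. -/
def fareyDet (q r : ℚ) : ℤ :=
  r.num * q.den - q.num * r.den

lemma fareyDet_pos_iff {q r : ℚ} : 0 < fareyDet q r ↔ q < r := by
  rw [fareyDet, sub_pos, Rat.lt_iff]

lemma den_mul_fareyDet (q r s : ℚ) :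
    r.den * fareyDet q s = q.den * fareyDet r s + s.den * fareyDet q r := by
  simp only [fareyDet]
  ring

lemma den_add_den_le_of_fareyDet_eq_one {q r s : ℚ} (h : fareyDet q s = 1) (hqr : q < r)
    (hrs : r < s) : q.den + s.den ≤ r.den := by
  have hqr' : 1 ≤ fareyDet q r := fareyDet_pos_iff.2 hqr
  have hrs' : 1 ≤ fareyDet r s := fareyDet_pos_iff.2 hrs
  have key : (q.den + s.den : ℤ) ≤ r.den :=
    calc (q.den + s.den : ℤ)
      _ = q.den * 1 + s.den * 1 := by ring
      _ ≤ q.den * fareyDet r s + s.den * fareyDet q r := by gcongr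
      _ = r.den := by rw [← den_mul_fareyDet, h, mul_one]
  exact_mod_cast key

lemma exists_mul_sub_mul_eq_one_mem_Ioc {a b : ℤ} (h : IsCoprime a b) (hb : 0 < b)
    (m : ℤ) : ∃ x y : ℤ, x * b - a * y = 1 ∧ y ∈ Set.Ioc m (m + b) := by
  obtain ⟨u, v, huv⟩ := h
  obtain ⟨t, ht, -⟩ := existsUnique_add_zsmul_mem_Ioc hb (-u) m
  refine ⟨v + t * a, -u + t • b, ?_, ht⟩
  rw [smul_eq_mul]
  linear_combination huv

lemma fareyDet_div_eq_one_and_den_div_eq {q : ℚ} {x y : ℤ} (hy : 0 < y)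
    (h : x * q.den - q.num * y = 1) :
    fareyDet q (x / y) = 1 ∧ ((x / y : ℚ).den : ℤ) = y := by
  have hxy : Nat.Coprime x.natAbs y.natAbs :=
    Int.isCoprime_iff_gcd_eq_one.1 ⟨q.den, -q.num, by linear_combination h⟩
  have hden := Rat.den_div_eq_of_coprime hy hxy
  exact ⟨by rw [fareyDet, Rat.num_div_eq_of_coprime hy hxy, hden, h], hden⟩

lemma exists_fareyDet_eq_one {q : ℚ} {k : ℕ} (hq : q.den ≤ k) :
    ∃ r : ℚ, fareyDet q r = 1 ∧ r.den ≤ k ∧ k < q.den + r.den := by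
  obtain ⟨x, y, hxy, hlower, hupper⟩ :=
    exists_mul_sub_mul_eq_one_mem_Ioc q.isCoprime_num_den (by exact_mod_cast q.den_pos)
      (k - q.den)
  obtain ⟨hdet, hden⟩ := fareyDet_div_eq_one_and_den_div_eq (q := q) (by lia) hxy
  exact ⟨x / y, hdet, by lia, by lia⟩

theorem consecutive_in_Qk_adjacent_general {k : ℕ} {q1 q2 : ℚ} (h1 : q1.den ≤ k)
    (h2 : q2.den ≤ k) (hlt : q1 < q2) (hgap : ∀ q : ℚ, q.den ≤ k → ¬(q1 < q ∧ q < q2)) :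
    q2.num * (q1.den : ℤ) - q1.num * (q2.den : ℤ) = 1 := by
  obtain ⟨r, hdet, hrk, hkr⟩ := exists_fareyDet_eq_one h1
  have hq1r : q1 < r := fareyDet_pos_iff.1 (by rw [hdet]; exact one_pos)
  have hq2r : q2 ≤ r := not_lt.1 fun h => hgap r hrk ⟨hq1r, h⟩
  obtain rfl | hq2r := hq2r.eq_or_lt
  · exact hdet
  · have hsum := den_add_den_le_of_fareyDet_eq_one hdet hlt hq2r
    lia

/-- Fix `k ≥ 1` and let `Q_k` be the set of rationals in `[0,1]` with
reduced denominator at most `k`. If `q1 < q2` are in `Q_k` and no element of `Q_k` lies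
strictly between them, then `q1` and `q2` are adjacent: `l2·k1 − l1·k2 = 1` where
`q1 = l1/k1` and `q2 = l2/k2` in lowest terms. -/
theorem consecutive_in_Qk_adjacent
    (k : ℕ) (hk : 1 ≤ k) (q1 q2 : ℚ)
    (h1 : 0 ≤ q1 ∧ q1 ≤ 1 ∧ q1.den ≤ k)
    (h2 : 0 ≤ q2 ∧ q2 ≤ 1 ∧ q2.den ≤ k)
    (hlt : q1 < q2)
    (hgap : ∀ q : ℚ, 0 ≤ q → q ≤ 1 → q.den ≤ k → ¬(q1 < q ∧ q < q2)) :
    q2.num * (q1.den : ℤ) - q1.num * (q2.den : ℤ) = 1 :=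
  consecutive_in_Qk_adjacent_general h1.2.2 h2.2.2 hlt fun q hq hbetween =>
    hgap q (h1.1.trans hbetween.1.le) (hbetween.2.le.trans h2.2.1) hq hbetween
end

section
/- Let l1 ≥ 0, l2 ≥ 1, k1 ≥ 1, k2 ≥ 1 be integers with l2·k1 − l1·k2 = 1. Let t be a natural number and let a_1, ..., a_t be nonnegative integers satisfying (i) the sum over i of max(a_i − 1, 0) is at most (l2 − 1)·k1, and (ii) the sum over i of a_i is at least (l1 + 1)·k2. Then t ≥ k1 + k2 − 1. -/
theorem sum_sub_card_le_sum_sub_one_sup_zero {ι M : Type*}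
    [AddCommGroupWithOne M] [Lattice M] [IsOrderedAddMonoid M] (s : Finset ι) (a : ι → M) :
    ∑ i ∈ s, a i - (s.card : M) ≤ ∑ i ∈ s, ((a i - 1) ⊔ 0) :=
  calc ∑ i ∈ s, a i - (s.card : M)
    _ = ∑ i ∈ s, (a i - 1) := by
      rw [Finset.sum_sub_distrib, Finset.sum_const, nsmul_one]
    _ ≤ ∑ i ∈ s, ((a i - 1) ⊔ 0) := Finset.sum_le_sum fun _ _ ↦ le_sup_left

theorem counting_lower_bound_general {ι R : Type*}
    [Ring R] [Lattice R] [IsOrderedAddMonoid R] (l1 l2 k1 k2 : R) (s : Finset ι) (a : ι → R)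
    (h1 : ∑ i ∈ s, ((a i - 1) ⊔ 0) ≤ (l2 - 1) * k1)
    (h2 : (l1 + 1) * k2 ≤ ∑ i ∈ s, a i) :
    k1 + k2 - (l2 * k1 - l1 * k2) ≤ (s.card : R) :=
  calc k1 + k2 - (l2 * k1 - l1 * k2)
    _ = (l1 + 1) * k2 - (l2 - 1) * k1 := by noncomm_ring
    _ ≤ ∑ i ∈ s, a i - ∑ i ∈ s, ((a i - 1) ⊔ 0) := sub_le_sub h2 h1
    _ ≤ (s.card : R) := sub_le_comm.mp (sum_sub_card_le_sum_sub_one_sup_zero s a)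

/-- The core counting inequality of the lower-bound argument: if
`l2·k1 − l1·k2 = 1` (with `l1 ≥ 0`, `l2 ≥ 1`, `k1, k2 ≥ 1`) and the nonnegative integers
`a_1, ..., a_t` satisfy `∑ max(a_i − 1, 0) ≤ (l2 − 1)·k1` and `∑ a_i ≥ (l1 + 1)·k2`,
then `t ≥ k1 + k2 − 1`. -/
theorem counting_lower_bound
    (l1 l2 k1 k2 : ℤ)
    (hl1 : 0 ≤ l1) (hl2 : 1 ≤ l2) (hk1 : 1 ≤ k1) (hk2 : 1 ≤ k2)
    (hadj : l2 * k1 - l1 * k2 = 1)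
    (t : ℕ) (a : Fin t → ℕ)
    (h1 : (∑ i, max ((a i : ℤ) - 1) 0) ≤ (l2 - 1) * k1)
    (h2 : (l1 + 1) * k2 ≤ ∑ i, (a i : ℤ)) :
    k1 + k2 - 1 ≤ (t : ℤ) := by
  simpa only [hadj, Finset.card_univ, Fintype.card_fin] using
    counting_lower_bound_general l1 l2 k1 k2 Finset.univ (fun i ↦ (a i : ℤ)) h1 h2
end

section
/- Let l, k be coprime integers with 1 ≤ l < k. For every positive integer n there exist n step-function probability measures μ_1, ..., μ_n on [0,1] with the following property: for every natural number m and every set A ⊆ [0,1] that is achievable with m cuts, if μ_i(A) = l/k for every i ∈ {1, ..., n}, then m ≥ 2·(k−1)·n/k − k (as real numbers). -/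
/-!
Put `L = ⌈n / k⌉` and `J = n - L`, and split the measures into `J` high and `L` low ones. Choose
`N` and `q` with `N * l = k * q + 1`, and cut part of `[0, 1]` into `2 * N * J` consecutive cells of
length `h`. Cell `2 * i` belongs to the high measure `i % J`, and cell `2 * i + 1` to the low
measure `c (i % J)`, where the colouring `c` uses each of its `L` values for fewer than `k`
residues. Each measure is uniform on the union of its cells.

Shift the left endpoints of all cells of one measure by a common `u ∈ [0, h)` and count the shifted
points that lie in `A`. If the measure of `A` is `l / k`, the mean of this count over `u` is
`N * l / k = q + 1 / k` for a high measure, and `p * (q + 1 / k)` with `p < k` for a low measure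
serving `p` residues. The count is an integer, so some shift makes it at least `q + 1` in the first
case, and some shift makes it at most `p * q` in the second.

With these shifts the high and low points still alternate, and `A` contains at least `J` more high
points than low ones. Each high point in `A` in excess of the low ones forces a change of membership
on either side of it, up to an end effect. As there are at most `m` changes, `2 * J ≤ m + 1`.
-/

open MeasureTheory
open scoped ENNReal

/-- A step-function probability measure on `[0,1]`: a Borel probability measure on `ℝ`
that is absolutely continuous w.r.t. Lebesgue measure with a piecewise constant density
supported in `[0,1]`. -/
def IsStepMeasure (μ : Measure ℝ) : Prop :=
  IsProbabilityMeasure μ ∧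
  ∃ (n : ℕ) (a b : Fin n → ℝ) (c : Fin n → ℝ≥0∞),
    (∀ i, 0 ≤ a i ∧ b i ≤ 1) ∧
    μ = volume.withDensity
      (fun x => ∑ i, Set.indicator (Set.Ico (a i) (b i)) (fun _ => c i) x)

/-- `A ⊆ [0,1]` is achievable with `m` cuts: there are points
`0 = y_0 ≤ y_1 ≤ ... ≤ y_m ≤ y_{m+1} = 1` such that `A` is the union of some
subcollection of the `m+1` closed intervals determined by these points. -/
def AchievableWithCuts (m : ℕ) (A : Set ℝ) : Prop :=
  ∃ y : Fin (m + 2) → ℝ, Monotone y ∧ y 0 = 0 ∧ y (Fin.last (m + 1)) = 1 ∧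
    ∃ S : Finset (Fin (m + 1)), A = ⋃ i ∈ S, Set.Icc (y i.castSucc) (y i.succ)

open scoped Finset

section IntervalAverage

variable {ι : Type*} {h : ℝ} {s : Finset ι} {a : ι → ℝ} {B : Set ℝ}

/-- The average over `i ∈ s` of the uniform distributions on the intervals `[a i, a i + h)`.
The intervals may overlap; for empty `s` the junk value is the zero measure. -/
noncomputable def intervalAverage (h : ℝ) (s : Finset ι) (a : ι → ℝ) : Measure ℝ :=
  volume.withDensity fun x =>
    ∑ i ∈ s, (Set.Ico (a i) (a i + h)).indicator (fun _ => (ENNReal.ofReal h * #s)⁻¹) x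

lemma intervalAverage_apply (hB : MeasurableSet B) :
    intervalAverage h s a B =
      (ENNReal.ofReal h * #s)⁻¹ * ∑ i ∈ s, volume (Set.Ico (a i) (a i + h) ∩ B) := by
  rw [intervalAverage, withDensity_apply _ hB,
    lintegral_finsetSum _ fun i _ => measurable_const.indicator measurableSet_Ico, Finset.mul_sum]
  refine Finset.sum_congr rfl fun i _ => ?_
  rw [lintegral_indicator_const measurableSet_Ico, Measure.restrict_apply measurableSet_Ico]

lemma isStepMeasure_intervalAverage (hh : 0 < h) (hs : s.Nonempty)
    (ha : ∀ i ∈ s, 0 ≤ a i ∧ a i + h ≤ 1) : IsStepMeasure (intervalAverage h s a) := by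
  refine ⟨⟨?_⟩, #s, fun j => a (s.equivFin.symm j), fun j => a (s.equivFin.symm j) + h,
    fun _ => (ENNReal.ofReal h * #s)⁻¹, fun j => ha _ (s.equivFin.symm j).2, ?_⟩
  · have hmass : ENNReal.ofReal h * #s ≠ 0 := by simp [hh, hs.ne_empty]
    simp only [intervalAverage_apply MeasurableSet.univ, Set.inter_univ, Real.volume_Ico,
      add_sub_cancel_left, Finset.sum_const, nsmul_eq_mul]
    rw [mul_comm (#s : ℝ≥0∞), ENNReal.inv_mul_cancel hmass (by finiteness)]
  · rw [intervalAverage]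
    congr 1 with x
    rw [s.equivFin.symm.sum_comp fun i : s =>
      (Set.Ico (a i) (a i + h)).indicator (fun _ => (ENNReal.ofReal h * #s)⁻¹) x]
    exact (Finset.sum_coe_sort s fun i =>
      (Set.Ico (a i) (a i + h)).indicator (fun _ => (ENNReal.ofReal h * #s)⁻¹) x).symm

open scoped Classical in
lemma natCast_card_filter_add_mem (u : ℝ) :
    (#{i ∈ s | a i + u ∈ B} : ℝ≥0∞) =
      ∑ i ∈ s, ((a i + ·) ⁻¹' B).indicator 1 u := by
  simp only [Finset.card_filter, Nat.cast_sum, Nat.cast_ite, Nat.cast_one, Nat.cast_zero,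
    Set.indicator_apply, Set.mem_preimage, Pi.one_apply]

open scoped Classical in
lemma measurable_card_filter_add_mem (hB : MeasurableSet B) :
    Measurable fun u : ℝ => (#{i ∈ s | a i + u ∈ B} : ℝ≥0∞) := by
  simp only [natCast_card_filter_add_mem]
  exact Finset.measurable_sum _ fun i _ =>
    measurable_one.indicator (measurable_const_add (a i) hB)

open scoped Classical in
lemma setLIntegral_card_filter_add_mem (hh : 0 < h) (hB : MeasurableSet B) :
    ∫⁻ u in Set.Ico 0 h, (#{i ∈ s | a i + u ∈ B} : ℝ≥0∞) =
      ENNReal.ofReal h * (#s * intervalAverage h s a B) := by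
  have hmeas (i : ι) : MeasurableSet ((a i + ·) ⁻¹' B) := measurable_const_add (a i) hB
  have htranslate (i : ι) : volume ((a i + ·) ⁻¹' B ∩ Set.Ico 0 h) =
      volume (Set.Ico (a i) (a i + h) ∩ B) := by
    rw [← measure_preimage_add volume (a i) (Set.Ico (a i) (a i + h) ∩ B), Set.preimage_inter,
      Set.preimage_const_add_Ico, sub_self, add_sub_cancel_left, Set.inter_comm]
  simp only [natCast_card_filter_add_mem]
  rw [lintegral_finsetSum _ fun i _ => measurable_one.indicator (hmeas i)]
  simp only [lintegral_indicator_one (hmeas _), Measure.restrict_apply (hmeas _), htranslate]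
  rcases s.eq_empty_or_nonempty with rfl | hs
  · simp
  · have hmass : ENNReal.ofReal h * #s ≠ 0 := by simp [hh, hs.ne_empty]
    rw [intervalAverage_apply hB, ← mul_assoc, ENNReal.mul_inv_cancel_left hmass (by finiteness)]

open scoped Classical in
lemma setLAverage_card_filter_add_mem (hh : 0 < h) (hB : MeasurableSet B) :
    ⨍⁻ u in Set.Ico 0 h, (#{i ∈ s | a i + u ∈ B} : ℝ≥0∞) ∂volume =
      #s * intervalAverage h s a B := by
  rw [setLAverage_eq, setLIntegral_card_filter_add_mem hh hB, Real.volume_Ico, sub_zero,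
    mul_div_assoc, ENNReal.mul_div_cancel (by simpa using hh) ENNReal.ofReal_ne_top]

open scoped Classical in
lemma exists_card_filter_add_mem_le (hh : 0 < h) (hB : MeasurableSet B) :
    ∃ u ∈ Set.Ico 0 h,
      (#{i ∈ s | a i + u ∈ B} : ℝ≥0∞) ≤ #s * intervalAverage h s a B := by
  rw [← setLAverage_card_filter_add_mem hh hB]
  exact exists_le_setLAverage (by simpa using hh) (by simp)
    (measurable_card_filter_add_mem hB).aemeasurable

open scoped Classical in
lemma exists_le_card_filter_add_mem (hh : 0 < h) (hB : MeasurableSet B) :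
    ∃ u ∈ Set.Ico 0 h,
      #s * intervalAverage h s a B ≤ (#{i ∈ s | a i + u ∈ B} : ℝ≥0∞) := by
  rw [← setLAverage_card_filter_add_mem hh hB]
  refine exists_setLAverage_le (by simpa using hh) measurableSet_Ico.nullMeasurableSet
    (ne_top_of_le_ne_top ?_ (setLIntegral_mono measurable_const fun u _ =>
      Nat.cast_le.2 (Finset.card_filter_le s _)))
  rw [setLIntegral_const, Real.volume_Ico]
  finiteness

open scoped Classical in
lemma exists_isStepMeasure_card_filter_add_mem (hh : 0 < h)
    (ha : ∀ i ∈ s, 0 ≤ a i ∧ a i + h ≤ 1) :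
    ∃ μ : Measure ℝ, IsStepMeasure μ ∧ ∀ (B : Set ℝ) (l k : ℕ), 0 < k → MeasurableSet B →
      μ B = ENNReal.ofReal (l / k) →
      (∃ u ∈ Set.Ico 0 h, #{i ∈ s | a i + u ∈ B} * k ≤ #s * l) ∧
      (∃ u ∈ Set.Ico 0 h, #s * l ≤ #{i ∈ s | a i + u ∈ B} * k) := by
  rcases s.eq_empty_or_nonempty with rfl | hs
  · exact ⟨intervalAverage 1 {()} 0, isStepMeasure_intervalAverage one_pos (by simp) (by simp),
      fun _ _ _ _ _ _ => ⟨⟨0, by simp [hh]⟩, ⟨0, by simp [hh]⟩⟩⟩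
  refine ⟨intervalAverage h s a, isStepMeasure_intervalAverage hh hs ha,
    fun B l k hk hB hμ => ?_⟩
  have hk0 : (k : ℝ≥0∞) ≠ 0 := by exact_mod_cast hk.ne'
  have hmean : #s * intervalAverage h s a B = ((#s * l : ℕ) : ℝ≥0∞) / k := by
    rw [hμ, ENNReal.ofReal_div_of_pos (by exact_mod_cast hk), ENNReal.ofReal_natCast,
      ENNReal.ofReal_natCast, ← mul_div_assoc, Nat.cast_mul]
  obtain ⟨u, hu, hle⟩ := exists_card_filter_add_mem_le (s := s) (a := a) hh hB
  obtain ⟨v, hv, hge⟩ := exists_le_card_filter_add_mem (s := s) (a := a) hh hB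
  rw [hmean] at hle hge
  rw [ENNReal.le_div_iff_mul_le (.inl hk0) (.inl (by finiteness))] at hle
  rw [ENNReal.div_le_iff hk0 (by finiteness)] at hge
  exact ⟨⟨u, hu, by exact_mod_cast hle⟩, ⟨v, hv, by exact_mod_cast hge⟩⟩

end IntervalAverage

lemma exists_mem_Icc_castSucc_succ {α : Type*} [LinearOrder α] {m : ℕ} {y : Fin (m + 2) → α}
    {x : α} (h0 : y 0 ≤ x) (h1 : x ≤ y (Fin.last (m + 1))) :
    ∃ i : Fin (m + 1), x ∈ Set.Icc (y i.castSucc) (y i.succ) := by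
  by_contra! hx
  have hlt (i : Fin (m + 1)) (hi : y i.castSucc ≤ x) : y i.succ < x :=
    not_le.1 fun h => hx i ⟨hi, h⟩
  have hle (i : Fin (m + 2)) : y i ≤ x := Fin.induction h0 (fun i hi => (hlt i hi).le) i
  exact (hlt (Fin.last m) (hle _)).not_ge h1

/-- Each change of `r · ∈ S` along a chain `x 0 ≤ y 0 ≤ x 1 ≤ y 1 ≤ ⋯` costs an increase of `r`,
and each point has two neighbours in the chain, whence the factor `2`. -/
lemma two_mul_count_mem_le {α : Type*} [Preorder α] {r : α → ℕ} (hr : Monotone r)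
    (S : Set ℕ) [DecidablePred (· ∈ S)] {x y : ℕ → α} (hxy : ∀ i, x i ≤ y i)
    (hyx : ∀ i, y i ≤ x (i + 1)) (K : ℕ) :
    2 * Nat.count (fun i => r (x i) ∈ S) K ≤
      2 * Nat.count (fun i => r (y i) ∈ S) K + r (x K) + 1 := by
  suffices h : 2 * Nat.count (fun i => r (x i) ∈ S) K + (if r (x K) ∈ S then 1 else 0) ≤
      2 * Nat.count (fun i => r (y i) ∈ S) K + r (x K) + 1 by omega
  induction K with
  | zero => simp only [Nat.count_zero]; split_ifs <;> omega
  | succ K ih =>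
    have hK := hr (hxy K)
    have hK' := hr (hyx K)
    have hS : r (x K) ∈ S → r (y K) ∉ S → r (x K) < r (y K) :=
      fun hx hy => hK.lt_of_ne fun h => hy (h ▸ hx)
    have hS' : r (x (K + 1)) ∈ S → r (y K) ∉ S → r (y K) < r (x (K + 1)) :=
      fun hx hy => hK'.lt_of_ne fun h => hy (h ▸ hx)
    simp only [Nat.count_succ]
    split_ifs at ih ⊢ <;> simp_all only [forall_true_left, not_true, not_false_eq_true] <;> omega

namespace AchievableWithCuts

variable {m : ℕ} {A : Set ℝ}

protected lemma measurableSet (hA : AchievableWithCuts m A) : MeasurableSet A := by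
  obtain ⟨y, -, -, -, S, rfl⟩ := hA
  exact S.measurableSet_biUnion fun i _ => measurableSet_Icc

lemma exists_monotone (hA : AchievableWithCuts m A) :
    ∃ (r : ℝ → ℕ) (S : Set ℕ), Monotone r ∧ (∀ x, r x ≤ m) ∧
      ∀ x ∈ Set.Icc (0 : ℝ) 1, x ∈ A ↔ r x ∈ S := by
  classical
  obtain ⟨y, hy, hy0, hy1, S, rfl⟩ := hA
  -- A point shared by several intervals is assigned to a chosen one of them whenever possible.
  have hindex (x : Set.Icc (0 : ℝ) 1) : ∃ i, (x : ℝ) ∈ Set.Icc (y i.castSucc) (y i.succ) ∧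
      ((x : ℝ) ∈ ⋃ i ∈ S, Set.Icc (y i.castSucc) (y i.succ) → i ∈ S) := by
    by_cases hx : (x : ℝ) ∈ ⋃ i ∈ S, Set.Icc (y i.castSucc) (y i.succ)
    · obtain ⟨i, hi, hxi⟩ := Set.mem_iUnion₂.1 hx
      exact ⟨i, hxi, fun _ => hi⟩
    · obtain ⟨i, hxi⟩ :=
        exists_mem_Icc_castSucc_succ (hy0.trans_le x.2.1) (x.2.2.trans_eq hy1.symm)
      exact ⟨i, hxi, fun h => absurd h hx⟩
  choose r hr hrS using hindex
  have hmono : Monotone r := fun x x' hx => by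
    rcases hx.eq_or_lt with rfl | hx
    · rfl
    by_contra! hlt
    have hcut : (x' : ℝ) ≤ x :=
      (hr x').2.trans <| (hy (Fin.succ_le_castSucc_iff.2 hlt)).trans (hr x).1
    exact hx.not_ge hcut
  refine ⟨Set.IccExtend zero_le_one fun x => (r x : ℕ), Fin.val '' (S : Set (Fin (m + 1))),
    (Fin.val_strictMono.monotone.comp hmono).IccExtend _, fun _ => Nat.lt_succ_iff.1 (r _).2,
    fun x hx => ?_⟩
  rw [Set.IccExtend_of_mem _ _ hx, Fin.val_injective.mem_set_image]
  exact ⟨hrS ⟨x, hx⟩, fun hS => Set.mem_biUnion hS (hr ⟨x, hx⟩)⟩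

open scoped Classical in
lemma two_mul_card_filter_le (hA : AchievableWithCuts m A) {x y : ℕ → ℝ}
    (hxy : ∀ i, x i ≤ y i) (hyx : ∀ i, y i ≤ x (i + 1)) {K : ℕ} (hx : ∀ i < K, 0 ≤ x i)
    (hy : ∀ i < K, y i ≤ 1) :
    2 * #{i ∈ Finset.range K | x i ∈ A} ≤ 2 * #{i ∈ Finset.range K | y i ∈ A} + m + 1 := by
  obtain ⟨r, S, hr, hrm, hrS⟩ := hA.exists_monotone
  have hxA : ∀ i ∈ Finset.range K, x i ∈ A ↔ r (x i) ∈ S := fun i hi =>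
    have hi := Finset.mem_range.1 hi
    hrS _ ⟨hx i hi, (hxy i).trans (hy i hi)⟩
  have hyA : ∀ i ∈ Finset.range K, y i ∈ A ↔ r (y i) ∈ S := fun i hi =>
    have hi := Finset.mem_range.1 hi
    hrS _ ⟨(hx i hi).trans (hxy i), hy i hi⟩
  rw [Finset.filter_congr hxA, Finset.filter_congr hyA, ← Nat.count_eq_card_filter_range,
    ← Nat.count_eq_card_filter_range]
  have hcount := two_mul_count_mem_le hr S hxy hyx K
  have hlast := hrm (x K)
  omega

end AchievableWithCuts

section Blocks

variable {J L N q m : ℕ} {h : ℝ} {c : ℕ → ℕ} {A : Set ℝ}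

lemma card_filter_range_mul_mod (N J : ℕ) (p : ℕ → Prop) [DecidablePred p] :
    #{i ∈ Finset.range (N * J) | p (i % J)} = N * #{j ∈ Finset.range J | p j} := by
  simp only [← Nat.count_eq_card_filter_range]
  induction N with
  | zero => simp only [zero_mul, Nat.count_zero]
  | succ N ih =>
    have hlast : Nat.count (fun i => p ((N * J + i) % J)) J = Nat.count p J := by
      simp only [Nat.count_eq_card_filter_range]
      refine congrArg _ (Finset.filter_congr fun i hi => ?_)
      rw [Nat.mul_add_mod_self_right, Nat.mod_eq_of_lt (Finset.mem_range.1 hi)]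
    rw [add_mul, one_mul, Nat.count_add, ih, hlast, add_mul, one_mul]

lemma card_filter_eq_sum_card_fiberwise {ι κ : Type*} [DecidableEq κ] {s : Finset ι}
    {t : Finset κ} {f : ι → κ} (hf : ∀ i ∈ s, f i ∈ t) (p : ι → κ → Prop)
    [∀ i b, Decidable (p i b)] :
    #{i ∈ s | p i (f i)} = ∑ b ∈ t, #{i ∈ {i ∈ s | f i = b} | p i b} := by
  rw [Finset.card_eq_sum_card_fiberwise fun i hi => hf i (Finset.mem_filter.1 hi).1]
  refine Finset.sum_congr rfl fun b _ => congrArg _ ?_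
  grind

open scoped Classical in
lemma AchievableWithCuts.two_mul_le (hA : AchievableWithCuts m A) (hh : 0 < h)
    (hNJ : (2 * (N * J) : ℕ) * h ≤ 1) (hc : ∀ j < J, c j < L)
    (hhigh : ∀ j < J, ∃ u ∈ Set.Ico 0 h,
      q + 1 ≤ #{i ∈ {i ∈ Finset.range (N * J) | i % J = j} | ((2 * i : ℕ) * h + u) ∈ A})
    (hlow : ∀ b < L, ∃ u ∈ Set.Ico 0 h,
      #{i ∈ {i ∈ Finset.range (N * J) | c (i % J) = b} | ((2 * i + 1 : ℕ) * h + u) ∈ A} ≤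
        #{j ∈ Finset.range J | c j = b} * q) :
    2 * J ≤ m + 1 := by
  rcases J.eq_zero_or_pos with rfl | hJ
  · omega
  choose! v hv hvA using hhigh
  choose! w hw hwA using hlow
  have hmod (i : ℕ) : i % J < J := Nat.mod_lt i hJ
  have hv (i : ℕ) := hv _ (hmod i)
  have hw (i : ℕ) := hw _ (hc _ (hmod i))
  have hcell (i : ℕ) (hi : i < N * J) : (2 * i + 1 + 1) * h ≤ 1 := by
    refine (mul_le_mul_of_nonneg_right ?_ hh.le).trans hNJ
    exact_mod_cast (show 2 * i + 1 + 1 ≤ 2 * (N * J) by omega)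
  have hhigh : J * (q + 1) ≤
      #{i ∈ Finset.range (N * J) | ((2 * i : ℕ) * h + v (i % J)) ∈ A} := by
    rw [card_filter_eq_sum_card_fiberwise (f := (· % J)) (t := Finset.range J)
      (fun i _ => Finset.mem_range.2 (hmod i)) fun i j => ((2 * i : ℕ) * h + v j) ∈ A]
    simpa only [Finset.card_range, smul_eq_mul] using Finset.card_nsmul_le_sum
      (Finset.range J) _ (q + 1) fun j hj => hvA j (Finset.mem_range.1 hj)
  have hlow : #{i ∈ Finset.range (N * J) | ((2 * i + 1 : ℕ) * h + w (c (i % J))) ∈ A} ≤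
      J * q := by
    rw [card_filter_eq_sum_card_fiberwise (f := fun i => c (i % J)) (t := Finset.range L)
      (fun i _ => Finset.mem_range.2 (hc _ (hmod i))) fun i b => ((2 * i + 1 : ℕ) * h + w b) ∈ A]
    calc _ ≤ ∑ b ∈ Finset.range L, #{j ∈ Finset.range J | c j = b} * q :=
          Finset.sum_le_sum fun b hb => hwA b (Finset.mem_range.1 hb)
      _ = J * q := by
        rw [← Finset.sum_mul, ← Finset.card_eq_sum_card_fiberwise, Finset.card_range]
        exact fun j hj => Finset.mem_range.2 (hc j (Finset.mem_range.1 hj))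
  have hchain := hA.two_mul_card_filter_le (K := N * J)
    (x := fun i => (2 * i : ℕ) * h + v (i % J))
    (y := fun i => (2 * i + 1 : ℕ) * h + w (c (i % J)))
    (fun i => by push_cast; linarith [(hv i).2, (hw i).1])
    (fun i => by push_cast; linarith [(hw i).2, (hv (i + 1)).1])
    (fun i _ => add_nonneg (by positivity) (hv i).1)
    (fun i hi => by push_cast; linarith [(hw i).2, hcell i hi])
  have hgap : J * (q + 1) = J * q + J := mul_add_one J q
  omega

open scoped Classical in
lemma exists_isStepMeasure_fiber {a : ℕ → ℝ} (hh : 0 < h)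
    (ha : ∀ i < N * J, 0 ≤ a i ∧ a i + h ≤ 1) (b : ℕ) :
    ∃ μ : Measure ℝ, IsStepMeasure μ ∧ ∀ (B : Set ℝ) (l k : ℕ), 0 < k → MeasurableSet B →
      μ B = ENNReal.ofReal (l / k) →
      (∃ u ∈ Set.Ico 0 h,
        #{i ∈ {i ∈ Finset.range (N * J) | c (i % J) = b} | a i + u ∈ B} * k ≤
          N * #{j ∈ Finset.range J | c j = b} * l) ∧
      (∃ u ∈ Set.Ico 0 h, N * #{j ∈ Finset.range J | c j = b} * l ≤
        #{i ∈ {i ∈ Finset.range (N * J) | c (i % J) = b} | a i + u ∈ B} * k) := by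
  rw [← card_filter_range_mul_mod N J (c · = b)]
  exact exists_isStepMeasure_card_filter_add_mem hh fun i hi =>
    ha i (Finset.mem_range.1 (Finset.mem_filter.1 hi).1)

lemma exists_isStepMeasure_family {l k : ℕ} (hk : 0 < k) (hN : N * l = k * q + 1)
    (hc : ∀ j < J, c j < L) (hcard : ∀ b < L, #{j ∈ Finset.range J | c j = b} < k) :
    ∃ (μ : Fin J → Measure ℝ) (ν : Fin L → Measure ℝ),
      (∀ j, IsStepMeasure (μ j)) ∧ (∀ b, IsStepMeasure (ν b)) ∧
      ∀ (m : ℕ) (A : Set ℝ), AchievableWithCuts m A →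
        (∀ j, μ j A = ENNReal.ofReal (l / k)) → (∀ b, ν b A = ENNReal.ofReal (l / k)) →
        2 * J ≤ m + 1 := by
  obtain ⟨h, hh, hNJ⟩ : ∃ h : ℝ, 0 < h ∧ (2 * (N * J) : ℕ) * h ≤ 1 :=
    ⟨(2 * (N * J) + 1 : ℕ)⁻¹, by positivity,
      mul_inv_le_one_of_le₀ (by push_cast; linarith) (by positivity)⟩
  have hcell (e : ℕ) (he : e + 1 ≤ 2 * (N * J)) : 0 ≤ e * h ∧ e * h + h ≤ 1 := by
    refine ⟨by positivity, ?_⟩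
    rw [← add_one_mul]
    exact (mul_le_mul_of_nonneg_right (by exact_mod_cast he) hh.le).trans hNJ
  choose μ hμ hμA using exists_isStepMeasure_fiber (N := N) (J := J) (c := id)
    (a := fun i => (2 * i : ℕ) * h) hh fun i hi => hcell _ (by omega)
  choose ν hν hνA using exists_isStepMeasure_fiber (N := N) (J := J) (c := c)
    (a := fun i => (2 * i + 1 : ℕ) * h) hh fun i hi => hcell _ (by omega)
  refine ⟨fun j => μ j, fun b => ν b, fun j => hμ j, fun b => hν b, fun m A hA hμl hνl =>
    hA.two_mul_le hh hNJ hc (q := q) (fun j hj => ?_) fun b hb => ?_⟩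
  · obtain ⟨u, hu, hle⟩ := (hμA j A l k hk hA.measurableSet (hμl ⟨j, hj⟩)).2
    have hsingle : #{i ∈ Finset.range J | id i = j} = 1 := by
      simp only [id, Finset.filter_eq', Finset.mem_range, if_pos hj, Finset.card_singleton]
    rw [hsingle, mul_one, hN, mul_comm k] at hle
    exact ⟨u, hu, Nat.lt_of_mul_lt_mul_right hle⟩
  · obtain ⟨u, hu, hle⟩ := (hνA b A l k hk hA.measurableSet (hνl ⟨b, hb⟩)).1
    refine ⟨u, hu, Nat.le_of_lt_succ (Nat.lt_of_mul_lt_mul_right (hle.trans_lt ?_))⟩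
    have hp := hcard b hb
    set p := #{j ∈ Finset.range J | c j = b}
    calc N * p * l = p * q * k + p := by rw [mul_right_comm, hN]; ring
      _ < (p * q + 1) * k := by rw [add_one_mul]; omega

end Blocks

lemma card_filter_range_div_eq_le (J b : ℕ) {p : ℕ} (hp : 0 < p) :
    #{j ∈ Finset.range J | j / p = b} ≤ p := by
  have hsub : {j ∈ Finset.range J | j / p = b} ⊆ Finset.Ico (p * b) (p * b + p) := fun j hj => by
    obtain rfl := (Finset.mem_filter.1 hj).2
    exact Finset.mem_Ico.2 ⟨Nat.mul_div_le j p, Nat.lt_mul_div_succ j hp⟩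
  simpa using Finset.card_le_card hsub

lemma two_mul_sub_one_mul_div_sub_le {k n m : ℕ} (hk : 2 ≤ k)
    (h : 2 * n ≤ m + 1 + 2 * (n ⌈/⌉ k)) :
    2 * ((k : ℝ) - 1) * n / k - k ≤ m := by
  have hceil : k * (n ⌈/⌉ k) + 1 ≤ n + k := by
    have hfloor := Nat.mul_div_le (n + k - 1) k
    rw [Nat.ceilDiv_eq_add_pred_div]
    omega
  have hceil : (k : ℝ) * (n ⌈/⌉ k : ℕ) + 1 ≤ n + k := by exact_mod_cast hceil
  have h : (2 * n : ℝ) ≤ m + 1 + 2 * (n ⌈/⌉ k : ℕ) := by exact_mod_cast h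
  have hk : (2 : ℝ) ≤ k := by exact_mod_cast hk
  rw [sub_le_iff_le_add, div_le_iff₀ (by linarith)]
  -- The loss `1`, and the loss `2 * (k - 1) / k` from rounding up `n / k`, add up to at most `k`.
  have hround : 0 ≤ ((k : ℝ) - 2) * (k - 1) := mul_nonneg (by linarith) (by linarith)
  nlinarith

theorem icd_lower_bound_general (l k : ℕ) (hk : 1 < k) (hcop : Nat.Coprime l k) (n : ℕ) :
    ∃ μ : Fin n → Measure ℝ, (∀ i, IsStepMeasure (μ i)) ∧
      ∀ (m : ℕ) (A : Set ℝ), AchievableWithCuts m A →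
        (∀ i, μ i A = ENNReal.ofReal ((l : ℝ) / (k : ℝ))) → 2 * n ≤ m + 1 + 2 * (n ⌈/⌉ k) := by
  obtain ⟨N, -, hN⟩ := Nat.exists_mul_mod_eq_one_of_coprime hcop hk
  have hN : N * l = k * (l * N / k) + 1 := by rw [← hN, Nat.div_add_mod, mul_comm]
  obtain ⟨J, hJ⟩ : ∃ J, n = J + n ⌈/⌉ k :=
    Nat.exists_eq_add_of_le' <|
      (ceilDiv_le_iff_le_mul (by omega)).2 (Nat.le_mul_of_pos_left n (by omega))
  have hkn : n ≤ k * (n ⌈/⌉ k) := le_smul_ceilDiv (Nat.zero_lt_of_lt hk)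
  generalize n ⌈/⌉ k = L at hJ hkn ⊢
  subst hJ
  have hJL : J ≤ (k - 1) * L := by rw [tsub_mul, one_mul]; omega
  obtain ⟨μ, ν, hμ, hν, hbound⟩ := exists_isStepMeasure_family (J := J) (L := L)
    (c := fun j => j / (k - 1)) (by omega) hN
    (fun j hj => Nat.div_lt_of_lt_mul (hj.trans_le hJL))
    (fun b _ => (card_filter_range_div_eq_le J b (by omega)).trans_lt (by omega))
  refine ⟨Fin.append μ ν, Fin.addCases (by simpa using hμ) (by simpa using hν),
    fun m A hA hl => ?_⟩
  have hJm := hbound m A hA (fun j => by simpa using hl (j.castAdd L))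
    (fun b => by simpa using hl (b.natAdd J))
  omega

/-- For coprime `1 ≤ l < k` and every `n ≥ 1`, there exist `n`
step-function probability measures on `[0,1]` such that any set achievable with `m`
cuts on which every measure takes value exactly `l/k` requires
`m ≥ 2(k−1)n/k − k`. -/
theorem icd_lower_bound
    (l k : ℕ) (hl : 1 ≤ l) (hlk : l < k) (hcop : Nat.Coprime l k)
    (n : ℕ) (hn : 0 < n) :
    ∃ μ : Fin n → Measure ℝ, (∀ i, IsStepMeasure (μ i)) ∧
      ∀ (m : ℕ) (A : Set ℝ), AchievableWithCuts m A →
        (∀ i, μ i A = ENNReal.ofReal ((l : ℝ) / (k : ℝ))) →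
        2 * ((k : ℝ) - 1) * (n : ℝ) / (k : ℝ) - (k : ℝ) ≤ (m : ℝ) := by
  obtain ⟨μ, hμ, hbound⟩ := icd_lower_bound_general l k (by omega) hcop n
  exact ⟨μ, hμ, fun m A hA hl => two_mul_sub_one_mul_div_sub_le (by omega) (hbound m A hA hl)⟩
end

section
/- Let l, k be coprime integers with 1 ≤ l < k and k ≥ 2. There exist k step-function probability measures μ_1, ..., μ_k on [0,1] with the following property: for every natural number t, if A ⊆ [0,1] can be written as a union of t intervals and μ_i(A) = l/k for every i ∈ {1, ..., k}, then t ≥ k − 1. -/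
/-!
Cut `[0, 1)` into `2mp` equal cells, where `p = k - 1`. The last measure is uniform on the union of
the odd cells; the even cells are dealt cyclically to the other `p` measures, `m` cells each, and
each of those measures is uniform on its own cells.

Let `A` be a union of `t` intervals on which every measure is `α`. A measure owning `m` even cells
sees at most `⌊mα⌋` of them contained in `A`, so `A` contains at most `p⌊mα⌋` even cells, while it
meets at least `mpα` odd ones. Two odd cells met by the same interval have an even cell between
them which that interval contains, so `A` meets at most `t` more odd cells than it contains even
ones. Hence `t ≥ p(mα - ⌊mα⌋)`, and for `α = l/k` and `m ≡ -l⁻¹ (mod k)` the fractional part is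
`(k - 1)/k`, so that `t ≥ (k - 1)²/k > k - 2`.
-/

open MeasureTheory
open scoped ENNReal

open ProbabilityTheory Set Function
open scoped Finset

section UniformMeasure

variable {X ι : Type*} [MeasurableSpace X] {μ : Measure X}

lemma measure_ne_top_of_measureReal_pos {s : Set X} (hs : 0 < μ.real s) : μ s ≠ ∞ :=
  (ENNReal.toReal_pos_iff.1 hs).2.ne

variable [Fintype ι] {C : ι → Set X} {v : ℝ}

lemma card_mul_measureReal_cond_iUnion (hC : ∀ i, MeasurableSet (C i))
    (hd : Pairwise (Disjoint on C)) (hv : ∀ i, μ.real (C i) = v) (hv0 : 0 < v) (A : Set X) :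
    Fintype.card ι * μ[|⋃ i, C i].real A = μ.real ((⋃ i, C i) ∩ A) / v := by
  have hfin (i : ι) : μ (C i) ≠ ∞ := measure_ne_top_of_measureReal_pos (by rwa [hv])
  have hU : μ.real (⋃ i, C i) = Fintype.card ι * v := by
    simp [measureReal_iUnion_fintype hd hC hfin, hv]
  have hcond : μ[|⋃ i, C i].real A = (μ.real (⋃ i, C i))⁻¹ * μ.real ((⋃ i, C i) ∩ A) := by
    simp [measureReal_def, cond_apply (MeasurableSet.iUnion hC)]
  rcases isEmpty_or_nonempty ι with _ | _
  · simp
  · rw [hcond, hU]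
    field_simp

open Classical in
lemma card_subset_le_card_mul_cond (hC : ∀ i, MeasurableSet (C i)) (hd : Pairwise (Disjoint on C))
    (hv : ∀ i, μ.real (C i) = v) (hv0 : 0 < v) (A : Set X) :
    (#{i | C i ⊆ A} : ℝ) ≤ Fintype.card ι * μ[|⋃ i, C i].real A := by
  have hfin (i : ι) : μ (C i) ≠ ∞ := measure_ne_top_of_measureReal_pos (by rwa [hv])
  rw [card_mul_measureReal_cond_iUnion hC hd hv hv0, le_div_iff₀ hv0]
  have hUfin : μ (⋃ i, C i) ≠ ∞ := ((measure_iUnion_fintype_le μ C).trans_lt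
    (ENNReal.sum_lt_top.2 fun i _ ↦ (hfin i).lt_top)).ne
  set F : Finset ι := {i | C i ⊆ A}
  calc (#F : ℝ) * v = μ.real (⋃ i ∈ F, C i) := by
        rw [measureReal_biUnion_finset (hd.set_pairwise _) (fun i _ ↦ hC i) (fun i _ ↦ hfin i)]
        simp [hv]
    _ ≤ μ.real ((⋃ i, C i) ∩ A) := by
        refine measureReal_mono (iUnion₂_subset fun i hi ↦ ?_)
          (measure_ne_top_of_subset inter_subset_left hUfin)
        exact subset_inter (subset_iUnion C i) (Finset.mem_filter.1 hi).2

open Classical in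
lemma card_mul_cond_le_card_inter_nonempty (hC : ∀ i, MeasurableSet (C i))
    (hd : Pairwise (Disjoint on C)) (hv : ∀ i, μ.real (C i) = v) (hv0 : 0 < v) (A : Set X) :
    Fintype.card ι * μ[|⋃ i, C i].real A ≤ #{i | (C i ∩ A).Nonempty} := by
  have hfin (i : ι) : μ (C i) ≠ ∞ := measure_ne_top_of_measureReal_pos (by rwa [hv])
  rw [card_mul_measureReal_cond_iUnion hC hd hv hv0, div_le_iff₀ hv0]
  set T : Finset ι := {i | (C i ∩ A).Nonempty}
  calc μ.real ((⋃ i, C i) ∩ A) ≤ μ.real (⋃ i ∈ T, C i) := by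
        refine measureReal_mono ?_ (measure_biUnion_lt_top T.finite_toSet fun i _ ↦
          (hfin i).lt_top).ne
        rintro x ⟨hx, hxA⟩
        obtain ⟨i, hi⟩ := mem_iUnion.1 hx
        exact mem_biUnion (Finset.mem_filter.2 ⟨Finset.mem_univ i, x, hi, hxA⟩) hi
    _ ≤ ∑ i ∈ T, μ.real (C i) := measureReal_biUnion_finset_le T C
    _ = #T * v := by simp [hv]

end UniformMeasure

section Interlaced

/-- The families `D` and `E` alternate along `X`: for `s < s'`, the set `D s'` lies between `E s`
and `E s'`. In the construction below these are the even and the odd cells. -/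
def Interlaced {X ι : Type*} [Preorder X] [Preorder ι] (D E : ι → Set X) : Prop :=
  ∀ ⦃s s' : ι⦄, s < s' → ∀ x ∈ E s, ∀ y ∈ E s', D s' ⊆ Icc x y

variable {X ι κ ρ β : Type*} [Preorder X] [LinearOrder ι] [Fintype ι] [Fintype κ] [Fintype ρ]
  [Fintype β] {D E : ι → Set X} {I : β → Set X}

open Classical in
lemma Interlaced.card_inter_nonempty_le (h : Interlaced D E) (hI : ∀ j, (I j).OrdConnected) :
    #{s | (E s ∩ ⋃ j, I j).Nonempty} ≤ #{s | D s ⊆ ⋃ j, I j} + Fintype.card β := by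
  set T : Finset ι := {s | (E s ∩ ⋃ j, I j).Nonempty}
  set F : Finset ι := {s | D s ⊆ ⋃ j, I j}
  -- Charge each `s ∈ T \ F` to an interval meeting `E s`; no interval is charged twice.
  suffices #(T \ F) ≤ Fintype.card β by
    have := Finset.card_le_card_sdiff_add_card (s := T) (t := F)
    lia
  refine Finset.card_le_card_of_forall_subsingleton (t := Finset.univ)
    (fun s j ↦ (E s ∩ I j).Nonempty) (fun s hs ↦ ?_) (fun j _ ↦ ?_)
  · obtain ⟨x, hxE, hx⟩ := (Finset.mem_filter.1 (Finset.mem_sdiff.1 hs).1).2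
    obtain ⟨j, hj⟩ := mem_iUnion.1 hx
    exact ⟨j, Finset.mem_univ j, x, hxE, hj⟩
  · have not_lt_of_charged {s s' : ι} (hs : (E s ∩ I j).Nonempty) (hs' : (E s' ∩ I j).Nonempty)
        (hF : s' ∉ F) : ¬ s < s' := by
      intro hlt
      obtain ⟨x, hxE, hx⟩ := hs
      obtain ⟨y, hyE, hy⟩ := hs'
      have hD : D s' ⊆ I j := (h hlt x hxE y hyE).trans ((hI j).out hx hy)
      exact hF (Finset.mem_filter.2 ⟨Finset.mem_univ s', hD.trans (subset_iUnion I j)⟩)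
    rintro s ⟨hs, hsj⟩ s' ⟨hs', hsj'⟩
    exact le_antisymm (not_lt.1 (not_lt_of_charged hsj' hsj (Finset.mem_sdiff.1 hs).2))
      (not_lt.1 (not_lt_of_charged hsj hsj' (Finset.mem_sdiff.1 hs').2))

open Classical in
theorem Interlaced.card_mul_fract_le (h : Interlaced D E) (hI : ∀ j, (I j).OrdConnected)
    (e : ρ × κ ≃ ι) {α : ℝ}
    (hD : ∀ i, (#{r | D (e (r, i)) ⊆ ⋃ j, I j} : ℝ) ≤ Fintype.card ρ * α)
    (hE : Fintype.card ι * α ≤ #{s | (E s ∩ ⋃ j, I j).Nonempty}) :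
    Fintype.card κ * Int.fract (Fintype.card ρ * α) ≤ Fintype.card β := by
  have hcontained : (#{s | D s ⊆ ⋃ j, I j} : ℤ) ≤
      Fintype.card κ * ⌊Fintype.card ρ * α⌋ :=
    calc (#{s | D s ⊆ ⋃ j, I j} : ℤ)
        = ∑ i, (#{r | D (e (r, i)) ⊆ ⋃ j, I j} : ℤ) := by
          simp only [Finset.natCast_card_filter]
          rw [← e.sum_comp, Fintype.sum_prod_type_right]
      _ ≤ ∑ _i : κ, ⌊Fintype.card ρ * α⌋ :=
          Finset.sum_le_sum fun i _ ↦ Int.le_floor.2 (mod_cast hD i)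
      _ = Fintype.card κ * ⌊Fintype.card ρ * α⌋ := by simp
  have hcontained_real : (#{s | D s ⊆ ⋃ j, I j} : ℝ) ≤
      Fintype.card κ * ⌊Fintype.card ρ * α⌋ := mod_cast hcontained
  have hcharge : (#{s | (E s ∩ ⋃ j, I j).Nonempty} : ℝ) ≤
      #{s | D s ⊆ ⋃ j, I j} + Fintype.card β := mod_cast h.card_inter_nonempty_le hI
  rw [← Fintype.card_congr e, Fintype.card_prod, Nat.cast_mul] at hE
  rw [Int.fract]
  linarith

end Interlaced

lemma isStepMeasure_cond_iUnion_Ico {ι : Type*} [Finite ι] {a b : ι → ℝ} (ha : ∀ i, 0 ≤ a i)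
    (hb : ∀ i, b i ≤ 1) (hd : Pairwise (Disjoint on fun i ↦ Ico (a i) (b i)))
    (h0 : volume (⋃ i, Ico (a i) (b i)) ≠ 0) :
    IsStepMeasure volume[|⋃ i, Ico (a i) (b i)] := by
  set U : Set ℝ := ⋃ i, Ico (a i) (b i)
  have hUm : MeasurableSet U := .iUnion fun i ↦ measurableSet_Ico
  have hU : U ⊆ Icc 0 1 := iUnion_subset fun i ↦
    Ico_subset_Icc_self.trans (Icc_subset_Icc (ha i) (hb i))
  have hfin : volume U ≠ ∞ := measure_ne_top_of_subset hU measure_Icc_lt_top.ne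
  have := Fintype.ofFinite ι
  let f := (Fintype.equivFin ι).symm
  refine ⟨cond_isProbabilityMeasure_of_finite h0 hfin, Fintype.card ι, a ∘ f, b ∘ f,
    fun _ ↦ (volume U)⁻¹, fun i ↦ ⟨ha _, hb _⟩, ?_⟩
  have hdensity (x : ℝ) : ∑ i, (Ico (a (f i)) (b (f i))).indicator (fun _ ↦ (volume U)⁻¹) x =
      U.indicator (fun _ ↦ (volume U)⁻¹) x := by
    rw [f.sum_comp fun i ↦ (Ico (a i) (b i)).indicator (fun _ ↦ (volume U)⁻¹) x,
      ← Finset.indicator_biUnion_apply _ _ (hd.set_pairwise _)]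
    simp [U]
  simp only [comp_apply, hdensity]
  rw [withDensity_indicator hUm, withDensity_const, ProbabilityTheory.cond]

section Cell

/-- The `j`-th of the `M` half-open intervals of length `1 / M` into which `[0, 1)` is cut,
counting from `0`; for `j ≥ M` it lies outside `[0, 1)`. -/
def cell (M j : ℕ) : Set ℝ := Ico ((j : ℝ) / M) ((j + 1 : ℕ) / M)

variable {M : ℕ}

lemma measurableSet_cell (M j : ℕ) : MeasurableSet (cell M j) := measurableSet_Ico

lemma pairwise_disjoint_cell (M : ℕ) : Pairwise (Disjoint on cell M) := by
  have hmono : Monotone fun j : ℕ ↦ (j : ℝ) / M := fun i j hij ↦ by dsimp only; gcongr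
  exact hmono.pairwise_disjoint_on_Ico_succ

lemma volume_real_cell (M j : ℕ) : volume.real (cell M j) = 1 / M := by
  rw [cell, Real.volume_real_Ico_of_le (by gcongr; lia), ← sub_div]
  simp

lemma cell_subset_Icc {i c j : ℕ} (hic : i < c) (hcj : c < j) {x y : ℝ} (hx : x ∈ cell M i)
    (hy : y ∈ cell M j) : cell M c ⊆ Icc x y := by
  rintro z ⟨hcz, hzc⟩
  constructor
  · calc x ≤ (i + 1 : ℕ) / M := hx.2.le
      _ ≤ c / M := by gcongr; lia
      _ ≤ z := hcz
  · calc z ≤ (c + 1 : ℕ) / M := hzc.le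
      _ ≤ j / M := by gcongr; lia
      _ ≤ y := hy.1

lemma interlaced_cell (M N : ℕ) :
    Interlaced (fun s : Fin N ↦ cell M (2 * s)) (fun s : Fin N ↦ cell M (2 * s + 1)) :=
  fun _ _ hlt _ hx _ hy ↦ cell_subset_Icc (by lia) (by lia) hx hy

lemma isStepMeasure_cond_iUnion_cell {ι : Type*} [Finite ι] [Nonempty ι] {e : ι → ℕ}
    (he : Injective e) (heM : ∀ i, e i < M) : IsStepMeasure volume[|⋃ i, cell M (e i)] := by
  obtain ⟨i₀⟩ := ‹Nonempty ι›
  have hM : (0 : ℝ) < M := mod_cast (Nat.zero_le _).trans_lt (heM i₀)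
  refine isStepMeasure_cond_iUnion_Ico (fun i ↦ by positivity) (fun i ↦ ?_)
    ((pairwise_disjoint_cell M).comp_of_injective he) fun h0 ↦ ?_
  · rw [div_le_one hM]
    exact mod_cast heM i
  · have hzero : volume.real (cell M (e i₀)) = 0 := by
      rw [measureReal_def, measure_mono_null (subset_iUnion (fun i ↦ cell M (e i)) i₀) h0,
        ENNReal.toReal_zero]
    rw [volume_real_cell] at hzero
    exact (one_div_pos.2 hM).ne' hzero

end Cell

theorem exists_isStepMeasure_mul_fract_le {m p : ℕ} (hm : 0 < m) (hp : 0 < p) :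
    ∃ (ν : Fin p → Measure ℝ) (ν' : Measure ℝ), (∀ i, IsStepMeasure (ν i)) ∧ IsStepMeasure ν' ∧
      ∀ (t : ℕ) (I : Fin t → Set ℝ) (α : ℝ), (∀ j, (I j).OrdConnected) →
        (∀ i, (ν i).real (⋃ j, I j) ≤ α) → α ≤ ν'.real (⋃ j, I j) →
        p * Int.fract (m * α) ≤ t := by
  have : NeZero m := ⟨hm.ne'⟩
  have : NeZero (m * p) := ⟨(Nat.mul_pos hm hp).ne'⟩
  let M := 2 * (m * p)
  have hM : (0 : ℝ) < 1 / M := by positivity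
  have heven : Injective fun s : Fin (m * p) ↦ 2 * (s : ℕ) := fun s s' h ↦ by grind
  have hodd : Injective fun s : Fin (m * p) ↦ 2 * (s : ℕ) + 1 := fun s s' h ↦ by grind
  have hcolour (i : Fin p) :
      Injective fun r : Fin m ↦ 2 * (finProdFinEquiv (r, i) : ℕ) :=
    heven.comp (finProdFinEquiv.injective.comp (Prod.mk_left_injective i))
  refine ⟨fun i ↦ volume[|⋃ r : Fin m, cell M (2 * (finProdFinEquiv (r, i) : ℕ))],
    volume[|⋃ s : Fin (m * p), cell M (2 * s + 1)],
    fun i ↦ isStepMeasure_cond_iUnion_cell (hcolour i) fun r ↦ by lia,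
    isStepMeasure_cond_iUnion_cell hodd fun s ↦ by lia, fun t I α hI hν hν' ↦ ?_⟩
  have hcontained (i : Fin p) := card_subset_le_card_mul_cond (fun r ↦ measurableSet_cell M _)
    ((pairwise_disjoint_cell M).comp_of_injective (hcolour i)) (fun r ↦ volume_real_cell M _) hM
    (⋃ j, I j)
  have hmet := card_mul_cond_le_card_inter_nonempty (fun s ↦ measurableSet_cell M _)
    ((pairwise_disjoint_cell M).comp_of_injective hodd) (fun s ↦ volume_real_cell M _) hM
    (⋃ j, I j)
  simpa using (interlaced_cell M (m * p)).card_mul_fract_le hI finProdFinEquiv (α := α)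
    (fun i ↦ (hcontained i).trans (by gcongr; exact hν i)) (le_trans (by gcongr) hmet)

lemma exists_pos_fract_mul_div_eq {l k : ℕ} (hk : 2 ≤ k) (hcop : l.Coprime k) :
    ∃ m : ℕ, 0 < m ∧ Int.fract (m * ((l : ℝ) / k)) = ((k - 1 : ℕ) : ℝ) / k := by
  obtain ⟨m, -, hm⟩ := Nat.exists_mul_mod_eq_of_coprime (k - 1) hcop (by lia)
  rw [Nat.mod_eq_of_lt (by lia : k - 1 < k)] at hm
  refine ⟨m, Nat.pos_of_ne_zero ?_, ?_⟩
  · rintro rfl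
    rw [mul_zero, Nat.zero_mod] at hm
    lia
  · rw [← mul_div_assoc, ← Nat.cast_mul, Int.fract_div_natCast_eq_div_natCast_mod, mul_comm m, hm]

lemma le_of_mul_div_succ_le {p t : ℕ} (h : (p : ℝ) * (p / (p + 1 : ℕ)) ≤ t) : p ≤ t := by
  rw [← mul_div_assoc, div_le_iff₀ (by positivity)] at h
  have hsq : p * p ≤ t * (p + 1) := mod_cast h
  by_contra! hlt
  refine hsq.not_gt ?_
  calc t * (p + 1) = t * p + t := by ring
    _ < t * p + p := by gcongr
    _ = (t + 1) * p := by ring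
    _ ≤ p * p := by gcongr; lia

/-- For coprime `1 ≤ l < k` with `k ≥ 2`, there exist `k`
step-function probability measures on `[0,1]` such that whenever `A ⊆ [0,1]` is a union
of `t` intervals (= order-connected subsets of `[0,1]`) on which every measure takes
value exactly `l/k`, we must have `t ≥ k − 1`. -/
theorem icd_single_copy_lower_bound
    (l k : ℕ) (hl : 1 ≤ l) (hlk : l < k) (hk : 2 ≤ k) (hcop : Nat.Coprime l k) :
    ∃ μ : Fin k → Measure ℝ, (∀ i, IsStepMeasure (μ i)) ∧
      ∀ (t : ℕ) (I : Fin t → Set ℝ) (A : Set ℝ),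
        (∀ j, I j ⊆ Set.Icc (0 : ℝ) 1 ∧ (I j).OrdConnected) →
        A = ⋃ j, I j →
        (∀ i, μ i A = ENNReal.ofReal ((l : ℝ) / (k : ℝ))) →
        k - 1 ≤ t := by
  obtain ⟨p, rfl⟩ : ∃ p, k = p + 1 := ⟨k - 1, by lia⟩
  obtain ⟨m, hm, hfract⟩ := exists_pos_fract_mul_div_eq hk hcop
  obtain ⟨ν, ν', hν, hν', hbound⟩ := exists_isStepMeasure_mul_fract_le hm (by lia : 0 < p)
  let μ : Fin (p + 1) → Measure ℝ := Fin.snoc ν ν'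
  refine ⟨μ, Fin.forall_fin_succ'.2 ⟨by simpa [μ] using hν, by simpa [μ] using hν'⟩, ?_⟩
  rintro t I A hI rfl hA
  have hreal (i : Fin (p + 1)) : (μ i).real (⋃ j, I j) = l / (p + 1 : ℕ) := by
    rw [measureReal_def, hA i, ENNReal.toReal_ofReal (by positivity)]
  have hsq : (p : ℝ) * (p / (p + 1 : ℕ)) ≤ t := by
    rw [Nat.add_sub_cancel] at hfract
    rw [← hfract]
    exact hbound t I _ (fun j ↦ (hI j).2) (fun i ↦ by simpa [μ] using (hreal i.castSucc).le)
      (by simpa [μ] using (hreal (Fin.last p)).ge)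
  exact le_of_mul_div_succ_le hsq
end

section
/- For every real number α ∈ [0,1] and every pair of step-function probability measures μ_1, μ_2 on [0,1], there exists a set A ⊆ [0,1] achievable with 2 cuts such that μ_1(A) = α and μ_2(A) = α. -/
/-!
Bend `[0, 1]` into a circle. An arc of the circle is either an interval or the union of an initial
and a final interval of `[0, 1]`, so it takes two cuts. Unrolling the circle extends the
distribution functions of the two measures to continuous monotone functions `f`, `g` on `ℝ` that
grow by `1` over each turn, and the arc from `s` to `t` has measures `f t - f s` and `g t - g s`.

The pairs `(s, t)` with `f t = f s + α` form a connected subset of the plane: it is the preimage of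
a line under `f × f`, whose fibres are products of intervals. On this set `D t - D s`, where
`D = g - f` is periodic, is nonpositive when `s` is a maximum of `D` and nonnegative when `s` is a
minimum. Hence it vanishes for some pair, and that arc has measure `α` under both measures.
-/

open MeasureTheory
open scoped ENNReal

section Chords

open Set Filter Function

theorem isProperMap_of_monotone_of_surjective {f : ℝ → ℝ} (hmono : Monotone f)
    (hsurj : Surjective f) : IsProperMap f := by
  have hbot : Tendsto f atBot atBot :=
    tendsto_atBot_atBot_of_monotone hmono fun y => (hsurj y).imp fun _ hx => hx.le
  have htop : Tendsto f atTop atTop :=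
    tendsto_atTop_atTop_of_monotone hmono fun y => (hsurj y).imp fun _ hx => hx.ge
  rw [isProperMap_iff_tendsto_cocompact, cocompact_eq_atBot_atTop]
  exact ⟨hmono.continuous_of_surjective hsurj, hbot.sup_sup htop⟩

theorem isConnected_setOf_apply_eq_apply_add {f : ℝ → ℝ} (hmono : Monotone f)
    (hsurj : Surjective f) (α : ℝ) : IsConnected {p : ℝ × ℝ | f p.2 = f p.1 + α} := by
  have hproper := isProperMap_of_monotone_of_surjective hmono hsurj
  have hquot : Topology.IsQuotientMap (Prod.map f f) :=
    (hproper.prodMap hproper).isClosedMap.isQuotientMap (hproper.prodMap hproper).continuous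
      (hsurj.prodMap hsurj)
  have hfiber (y : ℝ × ℝ) : IsConnected (Prod.map f f ⁻¹' {y}) := by
    have hinterval (z : ℝ) : IsConnected (f ⁻¹' {z}) :=
      ⟨hsurj z, (ordConnected_singleton.preimage_mono hmono).isPreconnected⟩
    have hprod : Prod.map f f ⁻¹' {y} = (f ⁻¹' {y.1}) ×ˢ (f ⁻¹' {y.2}) := by
      ext p
      simp [Prod.ext_iff]
    exact hprod ▸ (hinterval y.1).prod (hinterval y.2)
  have hline : IsConnected {p : ℝ × ℝ | p.2 = p.1 + α} := by
    have hrange : {p : ℝ × ℝ | p.2 = p.1 + α} = range fun y => (y, y + α) := by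
      ext ⟨x, y⟩
      simp [eq_comm]
    exact hrange ▸ isConnected_range (by fun_prop)
  exact hquot.isCoinducing.isConnected_preimage_of_isClosed hfiber
    (isClosed_eq (by fun_prop) (by fun_prop)) hline

variable {X : Type*} [LinearOrder X] [TopologicalSpace X] [OrderClosedTopology X]

theorem exists_apply_eq_apply_add_and_apply_eq {f : ℝ → ℝ} (hmono : Monotone f)
    (hsurj : Surjective f) {D : ℝ → X} (hD : Continuous D) {c : ℝ} (hper : Periodic D c)
    (hc : c ≠ 0) (α : ℝ) :
    ∃ s t, f t = f s + α ∧ D t = D s := by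
  have hcompact : IsCompact (range D) := hper.compact_of_continuous hc hD
  obtain ⟨_, ⟨p, rfl⟩, hp⟩ := hcompact.exists_isLeast (range_nonempty D)
  obtain ⟨_, ⟨q, rfl⟩, hq⟩ := hcompact.exists_isGreatest (range_nonempty D)
  obtain ⟨p', hp'⟩ := hsurj (f p + α)
  obtain ⟨q', hq'⟩ := hsurj (f q + α)
  obtain ⟨⟨s, t⟩, hst, hDst⟩ :=
    (isConnected_setOf_apply_eq_apply_add hmono hsurj α).isPreconnected.intermediate_value₂
      (a := (q, q')) (b := (p, p')) hq' hp'
      (hD.comp continuous_snd).continuousOn (hD.comp continuous_fst).continuousOn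
      (hq (mem_range_self q')) (hp (mem_range_self p'))
  exact ⟨s, t, hst, hDst⟩

theorem exists_mem_Icc_apply_eq_apply_add_and_apply_eq {f : CircleDeg1Lift} (hf : Continuous f)
    {D : ℝ → X} (hD : Continuous D) (hper : Periodic D 1) {α : ℝ} (hα : α ∈ Icc 0 1) :
    ∃ s ∈ Icc (0 : ℝ) 1, ∃ t ∈ Icc s (s + 1), f t = f s + α ∧ D t = D s := by
  rcases hα.1.eq_or_lt with rfl | hα0
  · exact ⟨0, by simp, 0, by simp, by simp⟩
  rcases hα.2.eq_or_lt with rfl | hα1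
  · exact ⟨0, by simp, 0 + 1, by simp, f.map_add_one 0, hper 0⟩
  obtain ⟨s, t, hst, hDst⟩ := exists_apply_eq_apply_add_and_apply_eq f.monotone
    (f.continuous_iff_surjective.1 hf) hD hper one_ne_zero α
  have hlt : s < t := f.monotone.reflect_lt (by linarith)
  have hlt_add : t < s + 1 := f.monotone.reflect_lt (by linarith [f.map_add_one s])
  have hDint (x : ℝ) : D (x - ⌊s⌋) = D x := by simpa using hper.sub_int_mul_eq (x := x) ⌊s⌋
  refine ⟨s - ⌊s⌋, ⟨Int.fract_nonneg s, (Int.fract_lt_one s).le⟩,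
    t - ⌊s⌋, ⟨by linarith, by linarith⟩, ?_, ?_⟩
  · rw [f.map_sub_int, f.map_sub_int, hst]
    ring
  · rw [hDint, hDint, hDst]

end Chords

section Arcs

open Set

/-- The arc running counterclockwise from `s` to `t` on the circle obtained by gluing the endpoints
of `[0, 1]`, as a subset of `[0, 1]`. The endpoint `t` is given on the universal cover, and the
definition is meant for `0 ≤ s ≤ 1` and `s ≤ t ≤ s + 1`. -/
noncomputable def circleArc (s t : ℝ) : Set ℝ :=
  if t ≤ 1 then Icc s t else Icc 0 (t - 1) ∪ Icc s 1

theorem achievableWithCuts_circleArc {s t : ℝ} (hs : s ∈ Icc 0 1) (ht : t ∈ Icc s (s + 1)) :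
    AchievableWithCuts 2 (circleArc s t) := by
  unfold circleArc
  split_ifs with ht1
  · have hcuts : Monotone ![0, s, t, 1] := by simp [monotone_vecCons, hs.1, ht.1, ht1]
    exact ⟨![0, s, t, 1], hcuts, rfl, rfl, {1}, by simp⟩
  · have hcuts : Monotone ![0, t - 1, s, 1] := by
      simp [monotone_vecCons, le_of_not_ge ht1, ht.2, hs.2]
    refine ⟨![0, t - 1, s, 1], hcuts, rfl, rfl, {0, 2}, ?_⟩
    rw [Finset.set_biUnion_insert, Finset.set_biUnion_singleton]
    rfl

end Arcs

section DistributionFunctions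

open Set ProbabilityTheory

/-- The distribution function of a probability measure on `[0, 1]`, unrolled to the universal cover
of the circle obtained by gluing the endpoints. -/
noncomputable def cdfLift (μ : Measure ℝ) : CircleDeg1Lift where
  toFun x := ⌊x⌋ + cdf μ (Int.fract x)
  monotone' x y hxy := by
    change ⌊x⌋ + cdf μ (Int.fract x) ≤ ⌊y⌋ + cdf μ (Int.fract y)
    rcases (Int.floor_mono hxy).eq_or_lt with hfloor | hfloor
    · have hfract : Int.fract x ≤ Int.fract y := by
        rw [Int.fract, Int.fract, hfloor]
        linarith
      rw [hfloor]
      linarith [monotone_cdf μ hfract]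
    · have hfloor' : (⌊x⌋ : ℝ) + 1 ≤ ⌊y⌋ := mod_cast hfloor
      linarith [cdf_le_one μ (Int.fract x), cdf_nonneg μ (Int.fract y)]
  map_add_one' x := by
    rw [Int.floor_add_one, Int.fract_add_one, Int.cast_add, Int.cast_one]
    ring

theorem cdfLift_apply (μ : Measure ℝ) (x : ℝ) :
    cdfLift μ x = ⌊x⌋ + cdf μ (Int.fract x) :=
  rfl

variable {μ : Measure ℝ} [IsProbabilityMeasure μ]

theorem cdf_one_of_measure_compl_Icc (hμ : μ (Icc 0 1)ᶜ = 0) : cdf μ 1 = 1 := by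
  have hcompl : μ (Iic 1)ᶜ = 0 :=
    measure_mono_null (compl_subset_compl.2 Icc_subset_Iic_self) hμ
  rw [cdf_eq_real, measureReal_def, (prob_compl_eq_zero_iff measurableSet_Iic).1 hcompl,
    ENNReal.toReal_one]

variable [NullSingletonClass μ]

theorem cdf_zero_of_measure_compl_Icc (hμ : μ (Icc 0 1)ᶜ = 0) : cdf μ 0 = 0 := by
  have hIio : μ (Iio 0) = 0 :=
    measure_mono_null (fun x (hx : x < 0) (hx' : x ∈ Icc 0 1) => hx.not_ge hx'.1) hμ
  rw [cdf_eq_real, measureReal_def, ← measure_congr Iio_ae_eq_Iic, hIio, ENNReal.toReal_zero]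

theorem continuous_cdf : Continuous (cdf μ) := by
  rw [continuous_iff_continuousAt]
  intro x
  have hjump : ENNReal.ofReal (cdf μ x - Function.leftLim (cdf μ) x) = 0 := by
    rw [← StieltjesFunction.measure_singleton, measure_cdf, measure_singleton]
  rw [(monotone_cdf μ).continuousAt_iff_leftLim_eq_rightLim, StieltjesFunction.rightLim_eq]
  exact ((monotone_cdf μ).leftLim_le le_rfl).antisymm
    (sub_nonpos.1 (ENNReal.ofReal_eq_zero.1 hjump))

theorem measure_Icc_eq_ofReal_cdf_sub (s t : ℝ) :
    μ (Icc s t) = ENNReal.ofReal (cdf μ t - cdf μ s) := by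
  rw [← measure_congr Ioc_ae_eq_Icc, ← StieltjesFunction.measure_Ioc, measure_cdf]

theorem continuous_cdfLift (hμ : μ (Icc 0 1)ᶜ = 0) : Continuous (cdfLift μ) := by
  have hfract : Continuous ((fun x => cdf μ x - x) ∘ Int.fract) := by
    refine ContinuousOn.comp_fract'' (continuous_cdf.sub continuous_id).continuousOn ?_
    simp [cdf_zero_of_measure_compl_Icc hμ, cdf_one_of_measure_compl_Icc hμ]
  refine (continuous_id.add hfract).congr fun x => ?_
  simp only [Pi.add_apply, Function.comp_apply, id_eq, cdfLift_apply]
  linarith [Int.floor_add_fract x]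

theorem cdfLift_eq_cdf (hμ : μ (Icc 0 1)ᶜ = 0) {x : ℝ} (hx : x ∈ Icc 0 1) :
    cdfLift μ x = cdf μ x := by
  rcases hx.2.eq_or_lt with rfl | hx1
  · simp [cdfLift_apply, cdf_zero_of_measure_compl_Icc hμ, cdf_one_of_measure_compl_Icc hμ]
  · simp [cdfLift_apply, Int.floor_eq_zero_iff.2 ⟨hx.1, hx1⟩, Int.fract_eq_self.2 ⟨hx.1, hx1⟩]

theorem measure_Icc_zero_union_Icc_one (hμ : μ (Icc 0 1)ᶜ = 0) {u v : ℝ} (huv : u ≤ v) :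
    μ (Icc 0 u ∪ Icc v 1) = ENNReal.ofReal (cdf μ u + 1 - cdf μ v) := by
  have hdisj : AEDisjoint μ (Icc 0 u) (Icc v 1) :=
    measure_mono_null (fun _ hx => (hx.1.2.trans huv).antisymm hx.2.1) (measure_singleton v)
  rw [measure_union₀ measurableSet_Icc.nullMeasurableSet hdisj, measure_Icc_eq_ofReal_cdf_sub,
    measure_Icc_eq_ofReal_cdf_sub, cdf_zero_of_measure_compl_Icc hμ,
    cdf_one_of_measure_compl_Icc hμ, sub_zero,
    ← ENNReal.ofReal_add (cdf_nonneg μ u) (sub_nonneg.2 (cdf_le_one μ v)), add_sub_assoc]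

theorem measure_circleArc (hμ : μ (Icc 0 1)ᶜ = 0) {s t : ℝ} (hs : s ∈ Icc 0 1)
    (ht : t ∈ Icc s (s + 1)) :
    μ (circleArc s t) = ENNReal.ofReal (cdfLift μ t - cdfLift μ s) := by
  rw [cdfLift_eq_cdf hμ hs]
  unfold circleArc
  split_ifs with ht1
  · rw [measure_Icc_eq_ofReal_cdf_sub, cdfLift_eq_cdf hμ ⟨hs.1.trans ht.1, ht1⟩]
  · have hts : t - 1 ≤ s := sub_le_iff_le_add.2 ht.2
    have hlift : cdfLift μ t = cdf μ (t - 1) + 1 := by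
      rw [← cdfLift_eq_cdf hμ ⟨by linarith, hts.trans hs.2⟩, ← CircleDeg1Lift.map_add_one,
        sub_add_cancel]
    rw [measure_Icc_zero_union_Icc_one hμ hts, hlift]

end DistributionFunctions

namespace IsStepMeasure

variable {μ : Measure ℝ}

theorem nullSingletonClass (hμ : IsStepMeasure μ) : NullSingletonClass μ := by
  obtain ⟨-, n, a, b, c, -, rfl⟩ := hμ
  infer_instance

theorem measure_compl_Icc (hμ : IsStepMeasure μ) : μ (Set.Icc 0 1)ᶜ = 0 := by
  obtain ⟨-, n, a, b, c, hab, rfl⟩ := hμ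
  rw [withDensity_apply _ measurableSet_Icc.compl]
  refine setLIntegral_eq_zero measurableSet_Icc.compl fun x hx => ?_
  refine Finset.sum_eq_zero fun i _ => Set.indicator_of_notMem (fun hxi => hx ?_) _
  exact ⟨(hab i).1.trans hxi.1, hxi.2.le.trans (hab i).2⟩

end IsStepMeasure

theorem two_agents_two_cuts_general {α : ℝ} (hα : α ∈ Set.Icc 0 1) {μ1 μ2 : Measure ℝ}
    [IsProbabilityMeasure μ1] [NullSingletonClass μ1]
    [IsProbabilityMeasure μ2] [NullSingletonClass μ2]
    (hμ1 : μ1 (Set.Icc 0 1)ᶜ = 0) (hμ2 : μ2 (Set.Icc 0 1)ᶜ = 0) :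
    ∃ A : Set ℝ, AchievableWithCuts 2 A ∧
      μ1 A = ENNReal.ofReal α ∧ μ2 A = ENNReal.ofReal α := by
  have hcont1 := continuous_cdfLift hμ1
  have hcont2 := continuous_cdfLift hμ2
  have hper : Function.Periodic (⇑(cdfLift μ2) - ⇑(cdfLift μ1)) 1 := fun x => by
    simp only [Pi.sub_apply, CircleDeg1Lift.map_add_one, add_sub_add_right_eq_sub]
  obtain ⟨s, hs, t, ht, h1, hD⟩ :=
    exists_mem_Icc_apply_eq_apply_add_and_apply_eq hcont1 (hcont2.sub hcont1) hper hα
  have h2 : cdfLift μ2 t = cdfLift μ2 s + α := by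
    rw [Pi.sub_apply, Pi.sub_apply] at hD
    linarith
  refine ⟨circleArc s t, achievableWithCuts_circleArc hs ht, ?_, ?_⟩
  · rw [measure_circleArc hμ1 hs ht, h1, add_sub_cancel_left]
  · rw [measure_circleArc hμ2 hs ht, h2, add_sub_cancel_left]

/-- For every `α ∈ [0,1]` and every pair of step-function probability
measures `μ1, μ2` on `[0,1]`, there is a set achievable with `2` cuts on which both
measures take value exactly `α`. -/
theorem two_agents_two_cuts
    (α : ℝ) (h0 : 0 ≤ α) (h1 : α ≤ 1)
    (μ1 μ2 : Measure ℝ) (hμ1 : IsStepMeasure μ1) (hμ2 : IsStepMeasure μ2) :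
    ∃ A : Set ℝ, AchievableWithCuts 2 A ∧
      μ1 A = ENNReal.ofReal α ∧ μ2 A = ENNReal.ofReal α := by
  have := hμ1.1
  have := hμ2.1
  have := hμ1.nullSingletonClass
  have := hμ2.nullSingletonClass
  exact two_agents_two_cuts_general ⟨h0, h1⟩ hμ1.measure_compl_Icc hμ2.measure_compl_Icc
end

section
/- Let α = l/k (in lowest terms, k ≥ 1, 0 ≤ l ≤ k) be an element of Q*. Then for every positive integer n and every collection of n step-function probability measures μ_1, ..., μ_n on [0,1], there exist a natural number m with m ≤ 2·(k−1)·n/k (as real numbers) and a set A ⊆ [0,1] achievable with m cuts such that μ_i(A) = l/k for every i ∈ {1, ..., n}. -/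
open MeasureTheory
open scoped ENNReal

/-- `Q*` is the smallest subset of `ℚ` containing `0` and `1` and such that whenever
`q = l/k` (lowest terms) belongs to `Q*` and `p` is a prime not dividing the numerator
`l`, both `l/(k·p) = q/p` and `1 − q/p` belong to `Q*`. -/
inductive QStar : ℚ → Prop
  | zero : QStar 0
  | one : QStar 1
  | div (q : ℚ) (p : ℕ) (hp : p.Prime) (hq : QStar q) (hnd : ¬ (p : ℤ) ∣ q.num) :
      QStar (q / (p : ℚ))
  | one_sub_div (q : ℚ) (p : ℕ) (hp : p.Prime) (hq : QStar q) (hnd : ¬ (p : ℤ) ∣ q.num) :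
      QStar (1 - q / (p : ℚ))

/-!
A necklace splitting theorem for a prime `p` cuts `[0, 1]` at `(p - 1) n` points and colours the
pieces with `p` colours so that all colours have equal measure under `n` given measures. Applied to
the measures restricted to a set `D` with `m` cuts, it divides `D` into `p` parts of equal measure.
A cut of `D` bounds only one part and a new cut at most two, so one of the parts has at most
`(m + 2 (p - 1) n) / p` cuts; induction over `Q*`, with complements for `1 - q`, gives the bound.

For the splitting theorem, coloured partitions are the points of the join of `(p - 1) n + 1` copies
of `ZMod p`, and the excesses of the colours over the fair share form an equivariant map. If it had
no zero, labelling the simplices of a fine subdivision by the positions of the maximal entries would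
give an equivariant simplicial map to a join of only `(p - 1) n` copies of `ZMod p`. It is
impossible by Dold's theorem, proved here with chains modulo `p`: a chain `x k` in each dimension,
whose boundary is the image of `x (k - 1)` under `1 - g` or the norm alternately, can never become
degenerate, because a free action admits a contraction of these operators.
-/

namespace ConsensusDivision

/-! ### Ordered simplicial chains -/

section Chains

open Finsupp

variable {R : Type*} [CommRing R] {X Y : Type*}

/-- Chains of ordered simplices with vertices in `X` and coefficients in `R`: a simplex is a list of
vertices, repetitions allowed. The empty list is the augmentation simplex, so the length of a list
is its dimension plus one. -/
abbrev OrderedChain (R : Type*) [CommRing R] (X : Type*) := List X →₀ R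

lemma chainHom_eqOn_supported {M : Type*} [AddCommGroup M] [Module R M]
    {f g : OrderedChain R X →ₗ[R] M} {S : Set (List X)}
    (h : ∀ l ∈ S, f (single l 1) = g (single l 1)) : Set.EqOn f g (supported R R S) := by
  rw [supported_eq_span_single]
  exact LinearMap.eqOn_span (Set.forall_mem_image.2 h)

lemma chainHom_ext {M : Type*} [AddCommGroup M] [Module R M] {f g : OrderedChain R X →ₗ[R] M}
    (h : ∀ l, f (single l 1) = g (single l 1)) (z : OrderedChain R X) : f z = g z :=
  chainHom_eqOn_supported (S := Set.univ) (fun l _ => h l) (by simp)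

lemma map_mem_of_mem_supported {M : Type*} [AddCommGroup M] [Module R M] {S : Set (List X)}
    {N : Submodule R M} {f : OrderedChain R X →ₗ[R] M} (h : ∀ l ∈ S, f (single l 1) ∈ N)
    {z : OrderedChain R X} (hz : z ∈ supported R R S) : f z ∈ N := by
  suffices supported R R S ≤ N.comap f from this hz
  rw [supported_eq_span_single, Submodule.span_le]
  exact Set.forall_mem_image.2 h

/-- The cone over a chain with new first vertex `a`. -/
noncomputable def cone (a : X) : OrderedChain R X →ₗ[R] OrderedChain R X :=
  lmapDomain R R (List.cons a)

/-- The chain map induced by a map of vertices. -/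
noncomputable def chainMap (R : Type*) [CommRing R] (f : X → Y) :
    OrderedChain R X →ₗ[R] OrderedChain R Y :=
  lmapDomain R R (List.map f)

/-- The boundary of one ordered simplex, by recursion on its first vertex:
`∂ (a * l) = l - a * ∂ l`. -/
noncomputable def boundaryList (R : Type*) [CommRing R] : List X → OrderedChain R X
  | [] => 0
  | a :: l => single l 1 - cone a (boundaryList R l)

/-- The augmented simplicial boundary. -/
noncomputable def boundary : OrderedChain R X →ₗ[R] OrderedChain R X :=
  linearCombination R (boundaryList R)

@[simp] lemma cone_single (a : X) (l : List X) (r : R) :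
    cone a (single l r) = single (a :: l) r := by
  simp [cone]

@[simp] lemma chainMap_single (f : X → Y) (l : List X) (r : R) :
    chainMap R f (single l r) = single (l.map f) r := by
  simp [chainMap]

@[simp] lemma boundary_single_nil : boundary (single ([] : List X) (1 : R)) = 0 := by
  simp [boundary, boundaryList]

@[simp] lemma boundary_single_cons (a : X) (l : List X) :
    boundary (single (a :: l) (1 : R)) = single l 1 - cone a (boundary (single l 1)) := by
  simp [boundary, boundaryList]

lemma boundary_cone (a : X) (z : OrderedChain R X) :
    boundary (cone a z) = z - cone a (boundary z) :=
  chainHom_ext (f := boundary ∘ₗ cone a) (g := LinearMap.id - cone a ∘ₗ boundary)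
    (fun l => by simp) z

lemma boundary_boundary (z : OrderedChain R X) : boundary (boundary z) = 0 := by
  refine chainHom_ext (f := boundary ∘ₗ boundary) (g := 0) (fun l => ?_) z
  rw [LinearMap.comp_apply, LinearMap.zero_apply]
  induction l with
  | nil => simp
  | cons a l ih => simp [boundary_cone, ih]

lemma chainMap_cone (f : X → Y) (a : X) (z : OrderedChain R X) :
    chainMap R f (cone a z) = cone (f a) (chainMap R f z) :=
  chainHom_ext (f := chainMap R f ∘ₗ cone a) (g := cone (f a) ∘ₗ chainMap R f)
    (fun l => by simp) z

lemma boundary_chainMap (f : X → Y) (z : OrderedChain R X) :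
    boundary (chainMap R f z) = chainMap R f (boundary z) := by
  refine chainHom_ext (f := boundary ∘ₗ chainMap R f) (g := chainMap R f ∘ₗ boundary)
    (fun l => ?_) z
  rw [LinearMap.comp_apply, LinearMap.comp_apply]
  induction l with
  | nil => simp
  | cons a l ih => simp_all [chainMap_cone]

lemma chainMap_pow_single (f : X → X) (m : ℕ) (l : List X) (r : R) :
    (chainMap R f ^ m) (single l r) = single (l.map f^[m]) r := by
  induction m with
  | zero => simp
  | succ m ih =>
    rw [pow_succ', Module.End.mul_apply, ih, chainMap_single, List.map_map,
      Function.iterate_succ']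

lemma chainMap_pow_eq_one {f : X → X} {m : ℕ} (h : f^[m] = id) :
    chainMap R f ^ m = 1 :=
  LinearMap.ext (chainHom_ext fun l => by simp [chainMap_pow_single, h])

lemma chainMap_apply_nil (f : X → Y) (z : OrderedChain R X) : chainMap R f z [] = z [] := by
  refine chainHom_ext (f := lapply [] ∘ₗ chainMap R f) (g := lapply []) (fun l => ?_) z
  cases l <;> simp

lemma map_mem_supported {S : Set (List X)} {S' : Set (List Y)}
    {f : OrderedChain R X →ₗ[R] OrderedChain R Y}
    (h : ∀ l ∈ S, f (single l 1) ∈ supported R R S') {z : OrderedChain R X}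
    (hz : z ∈ supported R R S) : f z ∈ supported R R S' :=
  map_mem_of_mem_supported h hz

lemma cone_mem_supported {a : X} {S S' : Set (List X)} (h : ∀ l ∈ S, a :: l ∈ S')
    {z : OrderedChain R X} (hz : z ∈ supported R R S) : cone a z ∈ supported R R S' :=
  map_mem_of_mem_supported (fun l hl => by simpa using single_mem_supported R 1 (h l hl)) hz

lemma chainMap_mem_supported {f : X → Y} {S : Set (List X)} {S' : Set (List Y)}
    (h : ∀ l ∈ S, l.map f ∈ S') {z : OrderedChain R X} (hz : z ∈ supported R R S) :
    chainMap R f z ∈ supported R R S' :=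
  map_mem_of_mem_supported (fun l hl => by simpa using single_mem_supported R 1 (h l hl)) hz

lemma boundary_single_mem_supported (t : List X) :
    boundary (single t 1) ∈ supported R R {l | l.length + 1 = t.length ∧ l.Sublist t} := by
  induction t with
  | nil => simp
  | cons a t ih =>
    rw [boundary_single_cons]
    refine Submodule.sub_mem _ (single_mem_supported R _ (by simp)) (cone_mem_supported ?_ ih)
    exact fun l hl => ⟨by simp [hl.1], hl.2.cons_cons a⟩

end Chains

/-! ### Subdivision -/

section Subdivision

open Finsupp

variable {R : Type*} [CommRing R] {X Y : Type*}

/-- The subdivision operator on simplices with `k` vertices, with `b t` in the role of the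
barycentre of `t`: a simplex is sent to the cone from `b t` over the subdivision of its boundary.
For `b` the barycentre this is barycentric subdivision; an arbitrary labelling `b` of simplices
gives barycentric subdivision followed by the vertex map that `b` induces. -/
noncomputable def subdivide (b : List X → Y) : ℕ → (OrderedChain R X →ₗ[R] OrderedChain R Y)
  | 0 => linearCombination R fun t : List X => if t = [] then single [] 1 else 0
  | k + 1 => linearCombination R fun t => cone (b t) (subdivide b k (boundary (single t 1)))

@[simp] lemma subdivide_zero_single (b : List X → Y) (t : List X) :
    subdivide b 0 (single t (1 : R)) = if t = [] then single [] 1 else 0 := by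
  simp [subdivide]

lemma subdivide_succ_single (b : List X → Y) (k : ℕ) (t : List X) :
    subdivide b (k + 1) (single t (1 : R)) =
      cone (b t) (subdivide b k (boundary (single t 1))) := by
  simp [subdivide]

lemma boundary_subdivide_zero (b : List X → Y) (z : OrderedChain R X) :
    boundary (subdivide b 0 z) = 0 := by
  refine chainHom_ext (f := boundary ∘ₗ subdivide b 0) (g := 0) (fun t => ?_) z
  rw [LinearMap.comp_apply, subdivide_zero_single]
  split_ifs <;> simp

lemma boundary_subdivide_succ (b : List X → Y) (k : ℕ) (z : OrderedChain R X) :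
    boundary (subdivide b (k + 1) z) = subdivide b k (boundary z) := by
  induction k generalizing z with
  | zero =>
    refine chainHom_ext (f := boundary ∘ₗ subdivide b 1) (g := subdivide b 0 ∘ₗ boundary)
      (fun t => ?_) z
    rw [LinearMap.comp_apply, LinearMap.comp_apply, subdivide_succ_single, boundary_cone,
      boundary_subdivide_zero, map_zero, sub_zero]
  | succ k ih =>
    refine chainHom_ext (f := boundary ∘ₗ subdivide b (k + 2))
      (g := subdivide b (k + 1) ∘ₗ boundary) (fun t => ?_) z
    rw [LinearMap.comp_apply, LinearMap.comp_apply, subdivide_succ_single, boundary_cone, ih,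
      boundary_boundary, map_zero, map_zero, sub_zero]

lemma subdivide_chainMap {b : List X → Y} {g : X → X} {g' : Y → Y} {S : Set (List X)}
    (hS : ∀ l ∈ S, ∀ l', l'.Sublist l → l' ∈ S)
    (hb : ∀ t ∈ S, t ≠ [] → b (t.map g) = g' (b t)) (k : ℕ) {z : OrderedChain R X}
    (hz : z ∈ supported R R S) :
    subdivide b k (chainMap R g z) = chainMap R g' (subdivide b k z) := by
  induction k generalizing z with
  | zero =>
    refine chainHom_eqOn_supported (f := subdivide b 0 ∘ₗ chainMap R g)
      (g := chainMap R g' ∘ₗ subdivide b 0) (fun t _ => ?_) hz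
    simp [apply_ite (chainMap R g')]
  | succ k ih =>
    refine chainHom_eqOn_supported (f := subdivide b (k + 1) ∘ₗ chainMap R g)
      (g := chainMap R g' ∘ₗ subdivide b (k + 1)) (fun t ht => ?_) hz
    have hbd : boundary (single t (1 : R)) ∈ supported R R S :=
      supported_mono (fun l hl => hS t ht l hl.2) (boundary_single_mem_supported t)
    rw [LinearMap.comp_apply, LinearMap.comp_apply, chainMap_single, subdivide_succ_single,
      subdivide_succ_single, chainMap_cone, ← chainMap_single, boundary_chainMap, ih hbd]
    rcases eq_or_ne t [] with rfl | h0
    · simp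
    · rw [hb t ht h0]

/-- The full flags of faces of the simplex `t`, listed from the largest face to the smallest; they
index the simplices of the barycentric subdivision of `t`. -/
def flags (t : List X) : Set (List (List X)) :=
  {ts | ts.length = t.length ∧ ts.Pairwise (fun s s' => s'.Sublist s) ∧
    ∀ s ∈ ts, s ≠ [] ∧ s.Sublist t}

lemma cons_mem_flags {t s : List X} {ts : List (List X)} (hlen : s.length + 1 = t.length)
    (hst : s.Sublist t) (hts : ts ∈ flags s) : t :: ts ∈ flags t := by
  obtain ⟨hl, hpair, hmem⟩ := hts
  refine ⟨by simp [hl, hlen], ?_, ?_⟩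
  · exact List.pairwise_cons.2 ⟨fun r hr => (hmem r hr).2.trans hst, hpair⟩
  · refine List.forall_mem_cons.2 ⟨⟨?_, List.Sublist.refl t⟩, fun r hr => ?_⟩
    · exact List.ne_nil_of_length_pos (by omega)
    · exact ⟨(hmem r hr).1, (hmem r hr).2.trans hst⟩

lemma subdivide_single_mem_supported (b : List X → Y) (t : List X) :
    subdivide b t.length (single t 1) ∈ supported R R (List.map b '' flags t) := by
  induction h : t.length generalizing t with
  | zero =>
    obtain rfl := List.length_eq_zero_iff.1 h
    have : [] ∈ List.map b '' flags [] := ⟨[], by simp [flags], rfl⟩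
    simpa using single_mem_supported R (1 : R) this
  | succ k ih =>
    rw [subdivide_succ_single]
    refine cone_mem_supported
      (S := {l | ∃ s, s.length + 1 = t.length ∧ s.Sublist t ∧ l ∈ List.map b '' flags s}) ?_ ?_
    · rintro _ ⟨s, hlen, hst, ts, hts, rfl⟩
      exact ⟨t :: ts, cons_mem_flags hlen hst hts, rfl⟩
    · refine map_mem_supported (fun s hs => ?_) (boundary_single_mem_supported t)
      have hlen : s.length = k := by have := hs.1; omega
      exact supported_mono (by exact fun l hl => ⟨s, hs.1, hs.2, hl⟩) (ih s hlen)

lemma subdivide_mem_supported {b : List X → Y} {k : ℕ} {S : Set (List X)} {S' : Set (List Y)}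
    (hS : ∀ t ∈ S, t.length = k) (h : ∀ t ∈ S, ∀ ts ∈ flags t, ts.map b ∈ S')
    {z : OrderedChain R X} (hz : z ∈ supported R R S) : subdivide b k z ∈ supported R R S' := by
  refine map_mem_supported (fun t ht => ?_) hz
  rw [← hS t ht]
  exact supported_mono (Set.image_subset_iff.2 (h t ht)) (subdivide_single_mem_supported b t)

end Subdivision

/-! ### Ladders of chains under a cyclic action -/

section ResolutionOperator

open Finset

/-- The operators of the periodic resolution of a cyclic group of order `p` with generator `ρ`: the
identity in degree `0`, the norm `1 + ρ + ... + ρ ^ (p - 1)` in odd degrees, and the difference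
`1 - ρ` in positive even degrees. -/
def resolutionOp {A : Type*} [Ring A] (p : ℕ) (ρ : A) : ℕ → A
  | 0 => 1
  | 1 => ∑ m ∈ range p, ρ ^ m
  | 2 => 1 - ρ
  | k + 3 => resolutionOp p ρ (k + 1)

lemma resolutionOp_mul_resolutionOp {A : Type*} [Ring A] {p : ℕ} {ρ : A} (hρ : ρ ^ p = 1) :
    ∀ k, resolutionOp p ρ (k + 2) * resolutionOp p ρ (k + 1) = 0
  | 0 => by rw [resolutionOp, resolutionOp, mul_neg_geom_sum, hρ, sub_self]
  | 1 => by simp only [resolutionOp, geom_sum_mul_neg, hρ, sub_self]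
  | k + 2 => resolutionOp_mul_resolutionOp hρ k

variable {R M M' : Type*} [Ring R] [AddCommGroup M] [Module R M] [AddCommGroup M'] [Module R M']
  {ρ : Module.End R M} {ρ' : Module.End R M'}

lemma map_resolutionOp {f : M →ₗ[R] M'} (h : f ∘ₗ ρ = ρ' ∘ₗ f) (p : ℕ) (z : M) :
    ∀ k, f (resolutionOp p ρ k z) = resolutionOp p ρ' k (f z)
  | 0 => rfl
  | 1 => by
    simp only [resolutionOp, LinearMap.sum_apply, map_sum]
    exact sum_congr rfl fun m _ =>
      LinearMap.congr_fun (Module.End.commute_pow_left_of_commute h.symm m).symm z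
  | 2 => by
    simp only [resolutionOp, LinearMap.sub_apply, Module.End.one_apply, map_sub]
    rw [← LinearMap.comp_apply, h, LinearMap.comp_apply]
  | k + 3 => map_resolutionOp h p z (k + 1)

lemma coe_resolutionOp_restrict {N : Submodule R M} (hN : ∀ z ∈ N, ρ z ∈ N) (p k : ℕ) (w : N) :
    (resolutionOp p (ρ.restrict hN) k w : M) = resolutionOp p ρ k w :=
  map_resolutionOp (f := N.subtype) rfl p w k

lemma resolutionOp_mem {N : Submodule R M} (hN : ∀ z ∈ N, ρ z ∈ N) (p k : ℕ) {z : M}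
    (hz : z ∈ N) : resolutionOp p ρ k z ∈ N := by
  rw [← coe_resolutionOp_restrict hN p k ⟨z, hz⟩]
  exact Subtype.coe_prop _

lemma map_resolutionOp_of_mem {N : Submodule R M} (hN : ∀ z ∈ N, ρ z ∈ N) {f : M →ₗ[R] M'}
    (hf : ∀ z ∈ N, f (ρ z) = ρ' (f z)) (p k : ℕ) {z : M} (hz : z ∈ N) :
    f (resolutionOp p ρ k z) = resolutionOp p ρ' k (f z) := by
  have h : (f ∘ₗ N.subtype) ∘ₗ ρ.restrict hN = ρ' ∘ₗ f ∘ₗ N.subtype :=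
    LinearMap.ext fun w => hf w w.2
  rw [← coe_resolutionOp_restrict hN p k ⟨z, hz⟩]
  exact map_resolutionOp h p ⟨z, hz⟩ k

end ResolutionOperator

section Ladder

open Finsupp

variable {R : Type*} [CommRing R] {p : ℕ} {X Y : Type*}

/-- A ladder of length `K` for the vertex map `g`: chains `x 0, ..., x K`, starting with the empty
simplex, in which the boundary of each is the image of the previous one under the corresponding
operator of the periodic resolution. -/
def IsLadder (p : ℕ) (g : X → X) (x : ℕ → OrderedChain R X) (K : ℕ) : Prop :=
  x 0 = single [] 1 ∧
    ∀ k < K, boundary (x (k + 1)) = resolutionOp p (chainMap R g) k (x k)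

lemma IsLadder.map {g : X → X} {g' : Y → Y} {x : ℕ → OrderedChain R X} {K : ℕ}
    (hx : IsLadder p g x K) {F : ℕ → (OrderedChain R X →ₗ[R] OrderedChain R Y)}
    (hF0 : F 0 (single [] 1) = single [] 1)
    (hF : ∀ k z, boundary (F (k + 1) z) = F k (boundary z))
    {N : Submodule R (OrderedChain R X)} (hN : ∀ z ∈ N, chainMap R g z ∈ N)
    (hFg : ∀ k, ∀ z ∈ N, F k (chainMap R g z) = chainMap R g' (F k z))
    (hxN : ∀ k ≤ K, x k ∈ N) : IsLadder p g' (fun k => F k (x k)) K := by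
  refine ⟨(congrArg (F 0) hx.1).trans hF0, fun k hk => ?_⟩
  rw [hF, hx.2 k hk, map_resolutionOp_of_mem hN (hFg k) p k (hxN k hk.le)]

/-- The ladder obtained by coning: `x (k + 1)` is the cone with apex `v k` over the image of `x k`
under the resolution operator. -/
noncomputable def coneLadder (R : Type*) [CommRing R] (p : ℕ) (g : X → X) (v : ℕ → X) :
    ℕ → OrderedChain R X
  | 0 => single [] 1
  | k + 1 => cone (v k) (resolutionOp p (chainMap R g) k (coneLadder R p g v k))

lemma boundary_resolutionOp (p : ℕ) (g : X → X) (k : ℕ) (z : OrderedChain R X) :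
    boundary (resolutionOp p (chainMap R g) k z) =
      resolutionOp p (chainMap R g) k (boundary z) :=
  map_resolutionOp (LinearMap.ext (boundary_chainMap g)) p z k

lemma isLadder_coneLadder [CharP R p] {g : X → X} (hg : g^[p] = id) (v : ℕ → X) (K : ℕ) :
    IsLadder p g (coneLadder R p g v) K := by
  refine ⟨rfl, fun k hk => ?_⟩
  clear hk
  rw [coneLadder, boundary_cone, sub_eq_self, boundary_resolutionOp]
  induction k with
  | zero => simp [coneLadder]
  | succ k ih =>
    rw [coneLadder, boundary_cone, boundary_resolutionOp, ih, sub_zero]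
    cases k with
    | zero => simp [coneLadder, resolutionOp, chainMap_pow_single]
    | succ k =>
      have h := resolutionOp_mul_resolutionOp (A := Module.End R (OrderedChain R X))
        (chainMap_pow_eq_one hg) k
      rw [← Module.End.mul_apply (resolutionOp p _ _), h, LinearMap.zero_apply, map_zero]

end Ladder

section Contraction

open Finset Finsupp

variable {R : Type*} [CommRing R] {p : ℕ} {X : Type*}

/-- The ordered simplices in which two consecutive vertices coincide. -/
def degenerate (X : Type*) : Set (List X) :=
  {l | ¬ l.IsChain (· ≠ ·)}

lemma cons_mem_degenerate (a : X) {l : List X} (h : l ∈ degenerate X) : a :: l ∈ degenerate X :=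
  fun hc => h hc.tail

lemma map_mem_degenerate (g : X → X) {l : List X} (h : l ∈ degenerate X) :
    l.map g ∈ degenerate X := by
  refine fun hc => h ?_
  rw [List.isChain_map] at hc
  exact hc.imp fun a b hab e => hab (congrArg g e)

/-- If the first two vertices coincide, the two faces that need not be degenerate cancel. -/
lemma boundary_single_mem_degenerate {l : List X} (h : l ∈ degenerate X) :
    boundary (single l 1) ∈ supported R R (degenerate X) := by
  induction l with
  | nil => simp
  | cons a l ih =>
    by_cases hl : l ∈ degenerate X
    · rw [boundary_single_cons]
      exact Submodule.sub_mem _ (single_mem_supported R _ hl)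
        (cone_mem_supported (fun _ => cons_mem_degenerate a) (ih hl))
    · obtain ⟨l', rfl⟩ : ∃ l', l = a :: l' := by
        simp only [degenerate, Set.mem_ofPred_eq, not_not] at h hl
        cases l with
        | nil => simp at h
        | cons b l' => simp_all
      have hdeg (l : List X) : a :: a :: l ∈ degenerate X := fun hc => by simp at hc
      simp only [boundary_single_cons, map_sub, cone_single, sub_sub_cancel]
      exact cone_mem_supported (S := Set.range (a :: ·)) (Set.forall_mem_range.2 hdeg)
        (cone_mem_supported (S := Set.univ) (fun l _ => Set.mem_range_self l) (by simp))

lemma boundary_mem_degenerate {z : OrderedChain R X} (hz : z ∈ supported R R (degenerate X)) :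
    boundary z ∈ supported R R (degenerate X) :=
  map_mem_of_mem_supported (fun _ => boundary_single_mem_degenerate) hz

/-- The operator sending an ordered simplex with first vertex `v` to the sum of its translates by
`g ^ j`, for `j` in a finite set depending on the phase of `v`, and killing the empty simplex. -/
noncomputable def windowSum (R : Type*) [CommRing R] (g : X → X) (phase : X → ZMod p)
    (J : ZMod p → Finset ℕ) : Module.End R (OrderedChain R X) :=
  linearCombination R fun
    | [] => 0
    | v :: l => ∑ j ∈ J (phase v), single ((v :: l).map g^[j]) 1

@[simp] lemma windowSum_nil (g : X → X) (phase : X → ZMod p) (J : ZMod p → Finset ℕ) (r : R) :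
    windowSum R g phase J (single [] r) = 0 := by
  simp [windowSum]

lemma windowSum_cons (g : X → X) (phase : X → ZMod p) (J : ZMod p → Finset ℕ) (v : X)
    (l : List X) : windowSum R g phase J (single (v :: l) 1) =
      ∑ j ∈ J (phase v), (chainMap R g ^ j) (single (v :: l) 1) := by
  simp [windowSum, chainMap_pow_single]

lemma windowSum_mem_degenerate (g : X → X) (phase : X → ZMod p) (J : ZMod p → Finset ℕ)
    {z : OrderedChain R X} (hz : z ∈ supported R R (degenerate X)) :
    windowSum R g phase J z ∈ supported R R (degenerate X) := by
  refine map_mem_of_mem_supported (fun l hl => ?_) hz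
  cases l with
  | nil => simp
  | cons v l =>
    rw [windowSum_cons]
    refine Submodule.sum_mem _ fun j _ => ?_
    rw [chainMap_pow_single]
    exact single_mem_supported R _ (map_mem_degenerate _ hl)

/-- The part of a chain supported on simplices whose first vertex has phase `0`. -/
noncomputable def phaseZeroPart (R : Type*) [CommRing R] (g : X → X) (phase : X → ZMod p) :
    Module.End R (OrderedChain R X) :=
  windowSum R g phase fun t => if t = 0 then {0} else ∅

/-- The operator sending a simplex to the sum of its translates strictly before the first one whose
first vertex has phase `0`. -/
noncomputable def returnSum (R : Type*) [CommRing R] (g : X → X) (phase : X → ZMod p) :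
    Module.End R (OrderedChain R X) :=
  windowSum R g phase fun t => range (-t).val

lemma returnSum_cons (g : X → X) (phase : X → ZMod p) (v : X) (l : List X) :
    returnSum R g phase (single (v :: l) 1) =
      ∑ j ∈ range (-phase v).val, (chainMap R g ^ j) (single (v :: l) 1) :=
  windowSum_cons ..

lemma phaseZeroPart_cons (g : X → X) (phase : X → ZMod p) (v : X) (l : List X) :
    phaseZeroPart R g phase (single (v :: l) 1) =
      if phase v = 0 then single (v :: l) 1 else 0 := by
  rw [phaseZeroPart, windowSum_cons]
  split_ifs <;> simp

variable {g : X → X} {phase : X → ZMod p}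

lemma phase_iterate (hg : ∀ v, phase (g v) = phase v + 1) (m : ℕ) (v : X) :
    phase (g^[m] v) = phase v + m := by
  induction m with
  | zero => simp
  | succ m ih => rw [Function.iterate_succ_apply', hg, ih, Nat.cast_succ, add_assoc]

variable [NeZero p]

lemma phaseZeroPart_norm_cons (hg : ∀ v, phase (g v) = phase v + 1) (v : X) (l : List X) :
    phaseZeroPart R g phase
        (∑ m ∈ range p, (chainMap R g ^ m) (single (v :: l) 1)) =
      (chainMap R g ^ (-phase v).val) (single (v :: l) 1) := by
  have hterm (m : ℕ) : phaseZeroPart R g phase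
      ((chainMap R g ^ m) (single (v :: l) 1)) =
        if phase v + m = 0 then (chainMap R g ^ m) (single (v :: l) 1) else 0 := by
    rw [chainMap_pow_single, List.map_cons, phaseZeroPart_cons, phase_iterate hg]
  simp only [map_sum, hterm]
  rw [sum_eq_single_of_mem (-phase v).val (mem_range.2 (ZMod.val_lt _)), if_pos (by simp)]
  intro m hm hne
  refine if_neg fun h0 => hne ?_
  rw [← eq_neg_of_add_eq_zero_right h0, ZMod.val_cast_of_lt (mem_range.1 hm)]

lemma phaseZeroPart_norm_add_cons (hg : ∀ v, phase (g v) = phase v + 1) (v : X) (l : List X) :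
    phaseZeroPart R g phase (resolutionOp p (chainMap R g) 1 (single (v :: l) 1)) +
        resolutionOp p (chainMap R g) 2 (returnSum R g phase (single (v :: l) 1)) =
      single (v :: l) 1 := by
  have h := LinearMap.congr_fun (mul_neg_geom_sum (chainMap R g : Module.End R _)
    (-phase v).val) (single (v :: l) 1)
  simp only [Module.End.mul_apply, LinearMap.sum_apply, LinearMap.sub_apply,
    Module.End.one_apply] at h
  simp only [resolutionOp, LinearMap.sum_apply, phaseZeroPart_norm_cons hg, returnSum_cons,
    LinearMap.sub_apply, Module.End.one_apply, h, add_sub_cancel]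

lemma returnSum_difference_add_cons (hg : ∀ v, phase (g v) = phase v + 1) (v : X) (l : List X) :
    returnSum R g phase (resolutionOp p (chainMap R g) 2 (single (v :: l) 1)) +
        resolutionOp p (chainMap R g) 1
          (phaseZeroPart R g phase (single (v :: l) 1)) = single (v :: l) 1 := by
  have hshift (n : ℕ) : ∑ j ∈ range n, (chainMap R g ^ j)
      (chainMap R g (single (v :: l) 1)) =
      ∑ j ∈ range n, (chainMap R g ^ (j + 1)) (single (v :: l) 1) := rfl
  have hret : returnSum R g phase (chainMap R g (single (v :: l) 1)) =
      ∑ j ∈ range (-phase v - 1).val,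
        (chainMap R g ^ (j + 1)) (single (v :: l) 1) := by
    rw [← hshift, chainMap_single, List.map_cons, returnSum_cons, hg, neg_add']
  simp only [resolutionOp, LinearMap.sub_apply, Module.End.one_apply, map_sub, hret,
    returnSum_cons, phaseZeroPart_cons, LinearMap.sum_apply]
  obtain ⟨s, hs⟩ : ∃ s, s = -phase v - 1 := ⟨_, rfl⟩
  rw [← hs]
  have hcast : ((s.val + 1 : ℕ) : ZMod p) = -phase v := by simp [hs]
  rcases (Nat.succ_le_of_lt s.val_lt).lt_or_eq with hlt | heq
  · have hne : phase v ≠ 0 := fun h0 => by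
      have := ZMod.val_natCast_of_lt hlt
      simp [Nat.succ_eq_add_one, hcast, h0] at this
    rw [if_neg hne, ← hcast, ZMod.val_natCast_of_lt hlt, Nat.succ_eq_add_one, sum_range_succ']
    simp
  · have h0 : phase v = 0 := by
      rw [← neg_eq_zero, ← hcast, ← Nat.succ_eq_add_one, heq, ZMod.natCast_self]
    have hnorm := sum_range_succ' (fun j => (chainMap R g ^ j)
      (single (v :: l) 1)) s.val
    rw [← Nat.succ_eq_add_one, heq] at hnorm
    rw [if_pos h0, h0, hnorm]
    simp

lemma exists_contraction (hg : ∀ v, phase (g v) = phase v + 1) :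
    ∀ k, ∃ P Q : Module.End R (OrderedChain R X),
      (∀ z ∈ supported R R (degenerate X), P z ∈ supported R R (degenerate X)) ∧
      ∀ z, boundary (P (resolutionOp p (chainMap R g) (k + 1) z) +
        resolutionOp p (chainMap R g) (k + 2) (Q z)) = boundary z
  | 0 => by
    refine ⟨phaseZeroPart R g phase, returnSum R g phase,
      fun z hz => windowSum_mem_degenerate g phase _ hz, ?_⟩
    refine chainHom_ext (f := boundary ∘ₗ (phaseZeroPart R g phase * resolutionOp p (chainMap R g) 1
      + resolutionOp p (chainMap R g) 2 * returnSum R g phase)) (g := boundary) fun l => ?_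
    rw [LinearMap.comp_apply, LinearMap.add_apply, Module.End.mul_apply, Module.End.mul_apply]
    cases l with
    | nil => simp [phaseZeroPart, returnSum, resolutionOp, chainMap_pow_single]
    | cons v l => rw [phaseZeroPart_norm_add_cons hg]
  | 1 => by
    refine ⟨returnSum R g phase, phaseZeroPart R g phase,
      fun z hz => windowSum_mem_degenerate g phase _ hz, ?_⟩
    refine chainHom_ext (f := boundary ∘ₗ (returnSum R g phase * resolutionOp p (chainMap R g) 2
      + resolutionOp p (chainMap R g) 1 * phaseZeroPart R g phase)) (g := boundary) fun l => ?_
    rw [LinearMap.comp_apply, LinearMap.add_apply, Module.End.mul_apply, Module.End.mul_apply]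
    cases l with
    | nil => simp [phaseZeroPart, returnSum, resolutionOp]
    | cons v l => rw [returnSum_difference_add_cons hg]
  | k + 2 => exists_contraction hg k

lemma exists_boundary_sub_mem_degenerate (hg : ∀ v, phase (g v) = phase v + 1) (k : ℕ)
    {z : OrderedChain R X} (hz : resolutionOp p (chainMap R g) (k + 1) z ∈
      supported R R (degenerate X)) :
    ∃ w, boundary z - resolutionOp p (chainMap R g) (k + 2) (boundary w) ∈
      supported R R (degenerate X) := by
  obtain ⟨P, Q, hP, hPQ⟩ := exists_contraction (R := R) hg k
  refine ⟨Q z, ?_⟩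
  rw [← hPQ z, map_add, boundary_resolutionOp, add_sub_cancel_right]
  exact boundary_mem_degenerate (hP _ hz)

lemma resolutionOp_sub_boundary_notMem_degenerate [Nontrivial R]
    (hg : ∀ v, phase (g v) = phase v + 1) {x : ℕ → OrderedChain R X} {K : ℕ}
    (hx : IsLadder p g x K) {k : ℕ} (hk : k < K) (z : OrderedChain R X) :
    resolutionOp p (chainMap R g) (k + 1) (x (k + 1) - boundary z) ∉
      supported R R (degenerate X) := by
  intro hmem
  induction k generalizing z with
  | zero =>
    obtain ⟨w, hw⟩ := exists_boundary_sub_mem_degenerate hg 0 hmem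
    rw [map_sub, boundary_boundary, sub_zero, hx.2 0 hk, hx.1] at hw
    have hnil : ([] : List X) ∉ degenerate X := fun h => h List.isChain_nil
    have h0 := (mem_supported' R _).1 hw [] hnil
    simp [resolutionOp, chainMap_apply_nil] at h0
  | succ k ih =>
    obtain ⟨w, hw⟩ := exists_boundary_sub_mem_degenerate hg (k + 1) hmem
    rw [map_sub, boundary_boundary, sub_zero, hx.2 (k + 1) hk] at hw
    refine ih (by omega) w ?_
    rwa [map_sub]

lemma IsLadder.notMem_degenerate [Nontrivial R] (hg : ∀ v, phase (g v) = phase v + 1)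
    {x : ℕ → OrderedChain R X} {K : ℕ} (hx : IsLadder p g x (K + 1)) :
    x (K + 1) ∉ supported R R (degenerate X) := by
  intro hmem
  refine resolutionOp_sub_boundary_notMem_degenerate hg hx K.lt_succ_self 0 ?_
  rw [map_zero, sub_zero]
  refine resolutionOp_mem (fun z hz => ?_) p (K + 1) hmem
  exact chainMap_mem_supported (fun _ => map_mem_degenerate g) hz

end Contraction

/-! ### Fine subdivisions in a normed space -/

section FineSimplex

variable {E κ : Type*} [Dist E] {K : κ → Set E}

/-- The simplices of diameter at most `δ` in the polyhedral complex with faces `K c`. -/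
def fine (K : κ → Set E) (δ : ℝ) : Set (List E) :=
  {l | (∃ c, ∀ v ∈ l, v ∈ K c) ∧ ∀ v ∈ l, ∀ w ∈ l, dist v w ≤ δ}

lemma mem_fine_of_subset {δ : ℝ} {l l' : List E} (hl : l ∈ fine K δ) (h : l' ⊆ l) :
    l' ∈ fine K δ := by
  obtain ⟨⟨c, hc⟩, hdist⟩ := hl
  exact ⟨⟨c, fun v hv => hc v (h hv)⟩, fun v hv w hw => hdist v (h hv) w (h hw)⟩

end FineSimplex

section Fine

open Finsupp

variable {R : Type*} [CommRing R] {E : Type*} [NormedAddCommGroup E] [NormedSpace ℝ E]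
  {κ : Type*} {K : κ → Set E}

/-- The barycentre of a list of points (`0` for the empty list). -/
noncomputable def barycentre (l : List E) : E := (l.length : ℝ)⁻¹ • l.sum

lemma barycentre_mem {C : Set E} (hC : Convex ℝ C) {l : List E} (hl : l ≠ [])
    (h : ∀ v ∈ l, v ∈ C) : barycentre l ∈ C := by
  have hlen : (l.length : ℝ) ≠ 0 := by simpa using hl
  rw [barycentre, ← Fin.sum_univ_getElem, Finset.smul_sum]
  exact hC.sum_mem (fun _ _ => by positivity) (by simp [hlen])
    (fun i _ => h _ (List.getElem_mem _))

lemma map_barycentre (f : E →ₗ[ℝ] E) (l : List E) :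
    barycentre (l.map f) = f (barycentre l) := by
  simp [barycentre, map_list_sum]

/-- The factor is `(N - 1) / N` for `N` vertices, because the vertex `v` itself contributes nothing
to the average of the distances. -/
lemma dist_barycentre_le {l : List E} {δ : ℝ} {D : ℕ} (hD : l.length ≤ D + 1) {v : E}
    (hv : v ∈ l) (h : ∀ w ∈ l, dist v w ≤ δ) :
    dist v (barycentre l) ≤ D / (D + 1) * δ := by
  classical
  have hδ : 0 ≤ δ := dist_nonneg.trans (h v hv)
  have hpos : 0 < l.length := List.length_pos_of_mem hv
  have hsum : (l.length : ℝ) • (v - barycentre l) = (l.map (v - ·)).sum := by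
    rw [smul_sub, barycentre, smul_inv_smul₀ (by positivity)]
    clear hv h hD hpos
    induction l with
    | nil => simp
    | cons w l ih =>
      simp only [List.map_cons, List.sum_cons, List.length_cons, Nat.cast_succ, add_smul, one_smul,
        ← ih]
      abel
  have herase : (l.map (v - ·)).sum = ((l.erase v).map (v - ·)).sum := by
    rw [((List.perm_cons_erase hv).map _).sum_eq]
    simp
  have hnorm : l.length * dist v (barycentre l) ≤ (l.length - 1 : ℝ) * δ := by
    calc l.length * dist v (barycentre l) = ‖((l.erase v).map (v - ·)).sum‖ := by
          rw [← herase, ← hsum, norm_smul, dist_eq_norm, Real.norm_natCast]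
      _ ≤ ((l.erase v).map (dist v ·)).sum := by
          simpa [List.map_map, Function.comp_def, dist_eq_norm] using
            norm_multiset_sum_le ((l.erase v).map (v - ·) : Multiset E)
      _ ≤ ((l.erase v).map (dist v ·)).length • δ := by
          refine List.sum_le_card_nsmul _ _ (List.forall_mem_map.2 fun w hw => ?_)
          exact h w (List.mem_of_mem_erase hw)
      _ = _ := by
          rw [List.length_map, List.length_erase_of_mem hv, nsmul_eq_mul, Nat.cast_pred hpos]
  have hD' : (l.length : ℝ) ≤ D + 1 := by exact_mod_cast hD
  rw [div_mul_eq_mul_div, le_div_iff₀ (by positivity)]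
  refine le_of_mul_le_mul_left ?_ (show (0 : ℝ) < l.length by positivity)
  nlinarith

lemma dist_barycentre_barycentre_le {s s' : List E} {δ : ℝ} {D : ℕ} (hD : s.length ≤ D + 1)
    (hs' : s' ≠ []) (hsub : s' ⊆ s) (h : ∀ v ∈ s, ∀ w ∈ s, dist v w ≤ δ) :
    dist (barycentre s) (barycentre s') ≤ D / (D + 1) * δ := by
  rw [dist_comm, ← Metric.mem_closedBall]
  exact barycentre_mem (convex_closedBall _ _) hs' fun v hv =>
    dist_barycentre_le hD (hsub hv) (h v (hsub hv))

lemma map_barycentre_mem_fine (hK : ∀ c, Convex ℝ (K c)) {δ : ℝ} {D : ℕ} {t : List E}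
    (ht : t ∈ fine K δ) (hD : t.length ≤ D + 1) {ts : List (List E)} (hts : ts ∈ flags t) :
    ts.map barycentre ∈ fine K (D / (D + 1) * δ) := by
  obtain ⟨⟨c, hc⟩, hdist⟩ := ht
  obtain ⟨-, hpair, hmem⟩ := hts
  have hle {s s' : List E} (hs : s ∈ ts) (hs' : s' ∈ ts) (hsub : s' ⊆ s) :
      dist (barycentre s) (barycentre s') ≤ D / (D + 1) * δ := by
    have hst := (hmem s hs).2
    exact dist_barycentre_barycentre_le (hst.length_le.trans hD) (hmem s' hs').1 hsub
      fun v hv w hw => hdist v (hst.subset hv) w (hst.subset hw)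
  constructor
  · refine ⟨c, List.forall_mem_map.2 fun s hs => ?_⟩
    exact barycentre_mem (hK c) (hmem s hs).1 fun v hv => hc v ((hmem s hs).2.subset hv)
  · simp only [List.forall_mem_map]
    have : Std.Symm fun s s' : List E => dist (barycentre s) (barycentre s') ≤ D / (D + 1) * δ :=
      ⟨fun s s' h => by rwa [dist_comm]⟩
    intro s hs s' hs'
    exact List.Pairwise.forall_of_forall (fun s hs => hle hs hs (List.Subset.refl s))
      (hpair.imp_of_mem fun hs hs' hsub => hle hs hs' hsub.subset) hs hs'

lemma IsLadder.subdivide_barycentre {p : ℕ} {r : E →ₗ[ℝ] E} {x : ℕ → OrderedChain R E} {D : ℕ}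
    (hx : IsLadder p r x D) : IsLadder p r (fun k => subdivide barycentre k (x k)) D :=
  hx.map (N := ⊤) (by simp) (boundary_subdivide_succ _) (by simp)
    (fun k z _ => subdivide_chainMap (S := Set.univ) (by simp) (fun t _ _ => map_barycentre r t) k
      (by simp)) (by simp)

lemma IsLadder.exists_fine (hK : ∀ c, Convex ℝ (K c)) {p : ℕ} {r : E →ₗ[ℝ] E}
    {x : ℕ → OrderedChain R E} {D : ℕ} (hx : IsLadder p r x (D + 1)) {δ₀ : ℝ}
    (hx₀ : ∀ k ≤ D + 1, x k ∈ supported R R {l | l.length = k ∧ l ∈ fine K δ₀}) {δ : ℝ}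
    (hδ : 0 < δ) :
    ∃ x' : ℕ → OrderedChain R E, IsLadder p r x' (D + 1) ∧
      ∀ k ≤ D + 1, x' k ∈ supported R R {l | l.length = k ∧ l ∈ fine K δ} := by
  have hiter (M : ℕ) : ∃ x' : ℕ → OrderedChain R E, IsLadder p r x' (D + 1) ∧
      ∀ k ≤ D + 1, x' k ∈
        supported R R {l | l.length = k ∧ l ∈ fine K ((D / (D + 1)) ^ M * δ₀)} := by
    induction M with
    | zero => exact ⟨x, hx, by simpa using hx₀⟩
    | succ M ih =>
      obtain ⟨x', hx', hsupp⟩ := ih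
      refine ⟨_, hx'.subdivide_barycentre, fun k hk => ?_⟩
      refine subdivide_mem_supported (fun t ht => ht.1) (fun t ht ts hts => ?_) (hsupp k hk)
      refine ⟨by rw [List.length_map, hts.1, ht.1], ?_⟩
      rw [pow_succ', mul_assoc]
      exact map_barycentre_mem_fine hK ht.2 (ht.1.trans_le hk) hts
  have hlim : Filter.Tendsto (fun M : ℕ => ((D : ℝ) / (D + 1)) ^ M * δ₀) Filter.atTop (nhds 0) := by
    simpa using (tendsto_pow_atTop_nhds_zero_of_lt_one (by positivity)
      ((div_lt_one (by positivity)).2 (lt_add_one (D : ℝ)))).mul_const δ₀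
  obtain ⟨M, hM⟩ := (hlim.eventually_lt_const hδ).exists
  obtain ⟨x', hx', hsupp⟩ := hiter M
  refine ⟨x', hx', fun k hk => supported_mono (fun l hl => ?_) (hsupp k hk)⟩
  exact ⟨hl.1, hl.2.1, fun v hv w hw => (hl.2.2 v hv w hw).trans hM.le⟩

end Fine

/-! ### The join of copies of a cyclic group -/

section Rotation

variable {α : Type*} {p : ℕ}

/-- The free action of the generator of `ZMod p` on `α × ZMod p`. -/
def rotation (α : Type*) (p : ℕ) : Equiv.Perm (α × ZMod p) :=
  (Equiv.refl α).prodCongr (Equiv.addRight 1)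

@[simp] lemma rotation_apply (q : α × ZMod p) : rotation α p q = (q.1, q.2 + 1) := rfl

@[simp] lemma rotation_symm_apply (q : α × ZMod p) : (rotation α p).symm q = (q.1, q.2 - 1) :=
  Prod.ext rfl (sub_eq_add_neg _ _).symm

/-- The linear action of the generator of `ZMod p` on functions on `α × ZMod p`. -/
def rotateFun (α : Type*) (p : ℕ) : (α × ZMod p → ℝ) →ₗ[ℝ] (α × ZMod p → ℝ) :=
  LinearMap.funLeft ℝ ℝ (rotation α p).symm

@[simp] lemma rotateFun_apply (w : α × ZMod p → ℝ) (q : α × ZMod p) :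
    rotateFun α p w q = w (q.1, q.2 - 1) :=
  congrArg w (rotation_symm_apply q)

lemma rotateFun_single [DecidableEq α] (q : α × ZMod p) (r : ℝ) :
    rotateFun α p (Pi.single q r) = Pi.single (rotation α p q) r := by
  ext q'
  simp only [rotateFun_apply, ← rotation_symm_apply, Pi.single_apply, Equiv.symm_apply_eq]

lemma iterate_rotateFun_period : (rotateFun α p)^[p] = id := by
  have h (m : ℕ) (w : α × ZMod p → ℝ) (q) : (rotateFun α p)^[m] w q = w (q.1, q.2 - m) := by
    induction m generalizing q with
    | zero => simp
    | succ m ih =>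
      rw [Function.iterate_succ_apply', rotateFun_apply, ih, Nat.cast_succ, sub_sub, add_comm 1]
  exact funext fun w => funext fun q => by simp [h]

end Rotation

section Join

open Finsupp

variable {α : Type*} [Fintype α] {p : ℕ} [NeZero p]

/-- The maximal faces of the geometric realization of the join of copies of `ZMod p` indexed by
`α`: the face `joinFace c` is the simplex with vertices `(j, c j)`. -/
def joinFace (c : α → ZMod p) : Set (α × ZMod p → ℝ) :=
  {w ∈ stdSimplex ℝ (α × ZMod p) | ∀ q, q.2 ≠ c q.1 → w q = 0}

lemma convex_joinFace (c : α → ZMod p) : Convex ℝ (joinFace c) := by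
  refine (convex_stdSimplex ℝ _).inter fun v hv w hw a b _ _ _ q hq => ?_
  simp [hv q hq, hw q hq]

lemma isCompact_joinFace (c : α → ZMod p) : IsCompact (joinFace c) := by
  have hclosed : IsClosed {w : α × ZMod p → ℝ | ∀ q, q.2 ≠ c q.1 → w q = 0} := by
    simp only [Set.ofPred_forall]
    exact isClosed_iInter fun q => isClosed_iInter fun _ =>
      isClosed_eq (continuous_apply q) continuous_const
  exact (isCompact_stdSimplex ℝ _).inter_right hclosed

lemma dist_le_one_of_mem_stdSimplex {ι : Type*} [Fintype ι] {v w : ι → ℝ}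
    (hv : v ∈ stdSimplex ℝ ι) (hw : w ∈ stdSimplex ℝ ι) : dist v w ≤ 1 :=
  (dist_pi_le_iff zero_le_one).2 fun i => Real.dist_le_of_mem_Icc_01
    (mem_Icc_of_mem_stdSimplex hv i) (mem_Icc_of_mem_stdSimplex hw i)

lemma single_mem_joinFace [DecidableEq α] (c : α → ZMod p) (j : α) :
    Pi.single (j, c j) 1 ∈ joinFace c := by
  refine ⟨single_mem_stdSimplex ℝ _, fun q hq => Pi.single_eq_of_ne ?_ _⟩
  rintro rfl
  exact hq rfl

lemma sum_joinFace {c : α → ZMod p} {w : α × ZMod p → ℝ} (hw : w ∈ joinFace c) (j : α) :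
    ∑ a, w (j, a) = w (j, c j) :=
  Fintype.sum_eq_single _ fun a ha => hw.2 (j, a) ha

lemma rotateFun_mem_joinFace {c : α → ZMod p} {w : α × ZMod p → ℝ} (hw : w ∈ joinFace c) :
    rotateFun α p w ∈ joinFace (c + 1) := by
  refine ⟨⟨fun q => ?_, ?_⟩, fun q hq => ?_⟩
  · simpa using hw.1.1 _
  · exact (Equiv.sum_comp (rotation α p).symm w).trans hw.1.2
  · simpa using hw.2 (q.1, q.2 - 1) (by simpa [sub_eq_iff_eq_add] using hq)

lemma map_rotateFun_mem_fine {δ : ℝ} {l : List (α × ZMod p → ℝ)} (h : l ∈ fine joinFace δ) :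
    l.map (rotateFun α p) ∈ fine joinFace δ := by
  obtain ⟨⟨c, hc⟩, hdist⟩ := h
  refine ⟨⟨c + 1, List.forall_mem_map.2 fun v hv => rotateFun_mem_joinFace (hc v hv)⟩, ?_⟩
  simp only [List.forall_mem_map]
  refine fun v hv w hw => (dist_pi_le_iff (dist_nonneg.trans (hdist v hv v hv))).2 fun q => ?_
  simpa using (dist_le_pi_dist v w _).trans (hdist v hv w hw)

end Join

section Labelling

open Finsupp

variable {d p : ℕ}

lemma coneLadder_rotateFun_mem_supported {R : Type*} [CommRing R] {k : ℕ} (hk : k ≤ d + 1) :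
    coneLadder R p (rotateFun (Fin (d + 1)) p) (fun k => Pi.single (Fin.ofNat (d + 1) k, 0) 1) k ∈
      supported R R {l | l.length = k ∧ ∃ c : Fin (d + 1) → ZMod p,
        ∀ v ∈ l, ∃ j : Fin (d + 1), j.val < k ∧ v = Pi.single (j, c j) 1} := by
  induction k with
  | zero => exact single_mem_supported R 1 ⟨rfl, 0, by simp⟩
  | succ k ih =>
    refine cone_mem_supported (fun l hl => ?_)
      (resolutionOp_mem (fun z hz => ?_) p k (ih (Nat.le_of_succ_le hk)))
    · obtain ⟨hlen, c, hc⟩ := hl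
      have hval : (Fin.ofNat (d + 1) k).val = k := Nat.mod_eq_of_lt hk
      refine ⟨congrArg (· + 1) hlen, Function.update c (Fin.ofNat (d + 1) k) 0,
        List.forall_mem_cons.2 ⟨⟨_, hval.trans_lt k.lt_succ_self, ?_⟩, fun v hv => ?_⟩⟩
      · rw [Function.update_self]
      obtain ⟨j, hj, rfl⟩ := hc v hv
      refine ⟨j, by omega, ?_⟩
      rw [Function.update_of_ne]
      rintro rfl
      omega
    · refine chainMap_mem_supported (fun l hl => ?_) hz
      obtain ⟨hlen, c, hc⟩ := hl
      refine ⟨by rwa [List.length_map], c + 1, List.forall_mem_map.2 fun v hv => ?_⟩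
      obtain ⟨j, hj, rfl⟩ := hc v hv
      exact ⟨j, hj, rotateFun_single _ _⟩

lemma exists_isLadder_fine (R : Type*) [CommRing R] [NeZero p] [CharP R p] {δ : ℝ} (hδ : 0 < δ) :
    ∃ x : ℕ → OrderedChain R (Fin (d + 1) × ZMod p → ℝ),
      IsLadder p (rotateFun (Fin (d + 1)) p) x (d + 1) ∧
      ∀ k ≤ d + 1, x k ∈ supported R R {l | l.length = k ∧ l ∈ fine joinFace δ} := by
  have hx : IsLadder p (rotateFun (Fin (d + 1)) p) _ (d + 1) :=
    isLadder_coneLadder (R := R) iterate_rotateFun_period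
      (fun k => Pi.single (Fin.ofNat (d + 1) k, 0) 1) (d + 1)
  refine hx.exists_fine convex_joinFace
    (fun k hk => supported_mono ?_ (coneLadder_rotateFun_mem_supported hk)) hδ (δ₀ := 1)
  rintro l ⟨hlen, c, hc⟩
  have hface (v) (hv : v ∈ l) : v ∈ joinFace c := by
    obtain ⟨j, -, rfl⟩ := hc v hv
    exact single_mem_joinFace c j
  exact ⟨hlen, ⟨c, hface⟩, fun v hv w hw =>
    dist_le_one_of_mem_stdSimplex (hface v hv).1 (hface w hw).1⟩

lemma mem_degenerate_of_pairwise {β : Type*} {l : List (ℕ × β)} (hlen : d < l.length)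
    (hl : l.Pairwise fun y y' => y'.1 < y.1 ∨ y = y') (hlevel : ∀ y ∈ l, y.1 ∈ Finset.Icc 1 d) :
    l ∈ degenerate (ℕ × β) := by
  intro hne
  have hchain : (l.map Prod.fst).IsChain (· > ·) := by
    rw [List.isChain_map, List.isChain_iff_getElem]
    exact fun i hi => (hl.isChain.getElem i hi).resolve_right (hne.getElem i hi)
  have hnodup : (l.map Prod.fst).Nodup := hchain.pairwise.imp ne_of_gt
  have hcard : (l.map Prod.fst).toFinset.card ≤ (Finset.Icc 1 d).card :=
    Finset.card_le_card fun m hm => by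
      obtain ⟨y, hy, rfl⟩ := List.mem_map.1 (List.mem_toFinset.1 hm)
      exact hlevel y hy
  rw [List.toFinset_card_of_nodup hnodup, List.length_map, Nat.card_Icc] at hcard
  omega

/-- Subdividing with the labels in place of the barycentres maps a ladder of fine simplices to one
whose chains have decreasing levels; `d` levels do not suffice for `d + 1` vertices. -/
theorem false_of_equivariant_labelling [NeZero p] [Nontrivial (ZMod p)] {δ : ℝ} (hδ : 0 < δ)
    {b : List (Fin (d + 1) × ZMod p → ℝ) → ℕ × ZMod p}
    (hb : ∀ t ∈ fine joinFace δ, t ≠ [] →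
      b (t.map (rotateFun (Fin (d + 1)) p)) = rotation ℕ p (b t))
    (hlevel : ∀ t ∈ fine joinFace δ, t ≠ [] → (b t).1 ∈ Finset.Icc 1 d)
    (hmono : ∀ t ∈ fine joinFace δ, ∀ t', t'.Sublist t → t' ≠ [] →
      (b t').1 < (b t).1 ∨ b t = b t') : False := by
  obtain ⟨x, hx, hxmem⟩ := exists_isLadder_fine (d := d) (ZMod p) hδ
  have hsub : ∀ t ∈ fine joinFace δ, ∀ t' : List (Fin (d + 1) × ZMod p → ℝ),
    t'.Sublist t → t' ∈ fine joinFace δ := fun t ht t' h => mem_fine_of_subset ht h.subset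
  have hladder : IsLadder p (rotation ℕ p) (fun k => subdivide b k (x k)) (d + 1) :=
    hx.map (by simp) (boundary_subdivide_succ b)
      (fun z => chainMap_mem_supported fun l => map_rotateFun_mem_fine)
      (fun k z hz => subdivide_chainMap hsub hb k hz)
      fun k hk => supported_mono (fun l hl => hl.2) (hxmem k hk)
  refine hladder.notMem_degenerate (phase := Prod.snd) (fun q => rfl) ?_
  refine subdivide_mem_supported (fun t ht => ht.1) (fun t ht ts hts => ?_) (hxmem _ le_rfl)
  obtain ⟨hlen, hpair, hmem⟩ := hts
  refine mem_degenerate_of_pairwise (d := d) (by rw [List.length_map, hlen, ht.1]; omega) ?_ ?_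
  · refine List.pairwise_map.2 (hpair.imp_of_mem fun hs hs' h => ?_)
    exact hmono _ (hsub t ht.2 _ (hmem _ hs).2) _ h (hmem _ hs').1
  · exact List.forall_mem_map.2 fun s hs => hlevel s (hsub t ht.2 s (hmem s hs).2) (hmem s hs).1

end Labelling

/-! ### Zeros of equivariant maps -/

section Labels

variable {X κ : Type*} [Fintype κ]

open Classical in
/-- The labels of a simplex: the indices at which `Φ` attains its maximal entry at some vertex. -/
noncomputable def labels (Φ : X → κ → ℝ) (t : List X) : Finset κ :=
  {q | ∃ v ∈ t, ∀ q', Φ v q' ≤ Φ v q}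

lemma mem_labels {Φ : X → κ → ℝ} {t : List X} {q : κ} :
    q ∈ labels Φ t ↔ ∃ v ∈ t, ∀ q', Φ v q' ≤ Φ v q := by
  simp [labels]

lemma labels_mono (Φ : X → κ → ℝ) {t t' : List X} (h : t' ⊆ t) : labels Φ t' ⊆ labels Φ t :=
  fun _ hq =>
    let ⟨v, hv, hmax⟩ := mem_labels.1 hq
    mem_labels.2 ⟨v, h hv, hmax⟩

lemma labels_nonempty [Nonempty κ] (Φ : X → κ → ℝ) {t : List X} (ht : t ≠ []) :
    (labels Φ t).Nonempty := by
  obtain ⟨v, hv⟩ := List.exists_mem_of_ne_nil t ht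
  obtain ⟨q, hq⟩ := Finite.exists_max (Φ v)
  exact ⟨q, mem_labels.2 ⟨v, hv, hq⟩⟩

lemma labels_map {Φ : X → κ → ℝ} {g : X → X} {e : Equiv.Perm κ}
    (hΦ : ∀ v q, Φ (g v) q = Φ v (e.symm q)) (t : List X) :
    labels Φ (t.map g) = (labels Φ t).map e.toEmbedding := by
  ext q
  simp only [Finset.mem_map_equiv, mem_labels, List.mem_map, exists_exists_and_eq_and, hΦ]
  refine exists_congr fun v => and_congr_right fun _ => ?_
  exact (e.symm.surjective.forall (p := fun q' => Φ v q' ≤ Φ v (e.symm q))).symm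

end Labels

section Zero

variable {ι : Type*}

lemma eq_zero_of_row_maximal {β : Type*} [Fintype β] {w : ι × β → ℝ}
    (hsum : ∀ i, ∑ a, w (i, a) = 0) {i : ι} (hmax : ∀ a q, w q ≤ w (i, a)) : w = 0 := by
  have hle (q) : w q ≤ 0 := by
    by_contra! hq
    have hpos : 0 < ∑ a, w (i, a) :=
      Finset.sum_pos (fun a _ => hq.trans_le (hmax a q)) ⟨q.2, Finset.mem_univ _⟩
    exact hpos.ne' (hsum i)
  exact funext fun q => (Finset.sum_eq_zero_iff_of_nonpos fun a _ => hle (q.1, a)).1 (hsum q.1) q.2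
    (Finset.mem_univ _)

variable {p : ℕ}

lemma card_le_of_forall_exists_notMem [Fintype ι] [NeZero p] {A : Finset (ι × ZMod p)}
    (hA : ∀ i, ∃ a, (i, a) ∉ A) : A.card ≤ (p - 1) * Fintype.card ι := by
  classical
  choose σ hσ using hA
  have hdisj : Disjoint A (Finset.univ.image fun i => (i, σ i)) := by
    rw [Finset.disjoint_right, Finset.forall_mem_image]
    exact fun i _ => hσ i
  have hcard : (Finset.univ.image fun i => (i, σ i)).card = Fintype.card ι :=
    Finset.card_image_of_injective _ fun i j h => (Prod.ext_iff.1 h).1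
  have hle := Finset.card_le_univ (A ∪ Finset.univ.image fun i => (i, σ i))
  rw [Finset.card_union_of_disjoint hdisj, hcard, Fintype.card_prod, ZMod.card] at hle
  rw [Nat.sub_one_mul, mul_comm]
  omega

open Classical in
/-- The second components of the elements of `A` with first component `i`. -/
noncomputable def row [NeZero p] (A : Finset (ι × ZMod p)) (i : ι) : Finset (ZMod p) :=
  {a | (i, a) ∈ A}

lemma mem_row [NeZero p] {A : Finset (ι × ZMod p)} {i : ι} {a : ZMod p} :
    a ∈ row A i ↔ (i, a) ∈ A := by
  simp [row]

lemma row_map_rotation [NeZero p] (A : Finset (ι × ZMod p)) (i : ι) :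
    row (A.map (rotation ι p).toEmbedding) i =
      (row A i).map (Equiv.addRight 1).toEmbedding := by
  ext a
  simp [mem_row, Finset.mem_map_equiv, sub_eq_add_neg]

lemma natCast_card_row_ne_zero [NeZero p] {A : Finset (ι × ZMod p)} {i : ι} {a b : ZMod p}
    (ha : (i, a) ∈ A) (hb : (i, b) ∉ A) : ((row A i).card : ZMod p) ≠ 0 := by
  have hlt := Finset.card_lt_univ_of_notMem (mt mem_row.1 hb)
  rw [ZMod.card] at hlt
  rw [Ne, ZMod.natCast_eq_zero_iff]
  exact Nat.not_dvd_of_pos_of_lt (Finset.card_pos.2 ⟨a, mem_row.2 ha⟩) hlt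

/-- The phase is the average of one row of `A`; the row is selected from the set of nonempty rows,
which the rotation does not change. -/
lemma exists_phase (ι : Type*) (p : ℕ) [Fact p.Prime] :
    ∃ phase : Finset (ι × ZMod p) → ZMod p, ∀ A : Finset (ι × ZMod p), A.Nonempty →
      (∀ i, ∃ a, (i, a) ∉ A) → phase (A.map (rotation ι p).toEmbedding) = phase A + 1 := by
  classical
  rcases isEmpty_or_nonempty ι with _ | _
  · exact ⟨fun _ => 0, fun A hA => (IsEmpty.false hA.choose.1).elim⟩
  choose! select hselect using fun (s : Finset ι) (hs : s.Nonempty) => hs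
  refine ⟨fun A => (∑ a ∈ row A (select (A.image Prod.fst)), a) *
    ((row A (select (A.image Prod.fst))).card : ZMod p)⁻¹, fun A hA hmiss => ?_⟩
  have himage : (A.map (rotation ι p).toEmbedding).image Prod.fst = A.image Prod.fst := by
    rw [Finset.map_eq_image, Finset.image_image]
    rfl
  have hcard : ((row A (select (A.image Prod.fst))).card : ZMod p) ≠ 0 := by
    obtain ⟨⟨j, a⟩, ha, hj⟩ := Finset.mem_image.1 (hselect _ (hA.image Prod.fst))
    obtain ⟨b, hb⟩ := hmiss j
    exact hj ▸ natCast_card_row_ne_zero ha hb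
  simp only [himage, row_map_rotation, Finset.card_map, Finset.sum_map, Equiv.coe_toEmbedding,
    Equiv.coe_addRight, Finset.sum_add_distrib, Finset.sum_const, nsmul_eq_mul, mul_one]
  field_simp

variable [Fintype ι] [Fact p.Prime]

lemma exists_pos_forall_exists_notMem_labels {κ X : Type*} [Finite κ] [PseudoMetricSpace X]
    {K : κ → Set X} (hK : ∀ c, IsCompact (K c)) {Φ : X → ι × ZMod p → ℝ} (hcont : Continuous Φ)
    (hsum : ∀ c, ∀ w ∈ K c, ∀ i, ∑ a, Φ w (i, a) = 0) (hne : ∀ c, ∀ w ∈ K c, Φ w ≠ 0) :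
    ∃ δ > 0, ∀ t ∈ fine K δ, t ≠ [] → ∀ i, ∃ a, (i, a) ∉ labels Φ t := by
  let U (σ : ι → ZMod p) : Set X := ⋂ i, {w | ∃ q, Φ w (i, σ i) < Φ w q}
  have hU (σ) : IsOpen (U σ) := isOpen_iInter_of_finite fun i => by
    simp only [Set.ofPred_exists]
    exact isOpen_iUnion fun q => isOpen_lt (by fun_prop) (by fun_prop)
  have hcover : ⋃ c, K c ⊆ ⋃ σ, U σ := by
    refine Set.iUnion_subset fun c w hw => ?_
    have hex (i) : ∃ a q, Φ w (i, a) < Φ w q := by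
      by_contra! hmax
      exact hne c w hw (eq_zero_of_row_maximal (hsum c w hw) hmax)
    choose σ hσ using hex
    exact Set.mem_iUnion.2 ⟨σ, Set.mem_iInter.2 hσ⟩
  obtain ⟨δ, hδ, hball⟩ := lebesgue_number_lemma_of_metric (isCompact_iUnion hK) hU hcover
  refine ⟨δ / 2, half_pos hδ, fun t ⟨⟨c, hc⟩, hdist⟩ ht i => ?_⟩
  obtain ⟨v, hv⟩ := List.exists_mem_of_ne_nil t ht
  obtain ⟨σ, hσ⟩ := hball v (Set.mem_iUnion.2 ⟨c, hc v hv⟩)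
  refine ⟨σ i, fun hmem => ?_⟩
  obtain ⟨w, hw, hmax⟩ := mem_labels.1 hmem
  obtain ⟨q, hq⟩ := Set.mem_iInter.1
    (hσ (Metric.mem_ball.2 ((hdist w hw v hv).trans_lt (half_lt_self hδ)))) i
  exact (hmax q).not_gt hq

/-- If there is no zero, the labels of a fine simplex leave an index out in each row. Hence they
number between `1` and `d`, and paired with a phase they form an equivariant labelling. -/
theorem exists_zero_of_equivariant {d : ℕ} (hd : (p - 1) * Fintype.card ι ≤ d)
    {Φ : (Fin (d + 1) × ZMod p → ℝ) → ι × ZMod p → ℝ} (hcont : Continuous Φ)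
    (hΦ : ∀ w, Φ (rotateFun _ p w) = rotateFun ι p (Φ w))
    (hsum : ∀ c, ∀ w ∈ joinFace c, ∀ i, ∑ a, Φ w (i, a) = 0) :
    ∃ c, ∃ w ∈ joinFace c, Φ w = 0 := by
  rcases isEmpty_or_nonempty ι with _ | _
  · exact ⟨0, _, single_mem_joinFace 0 0, Subsingleton.elim _ _⟩
  by_contra! hne
  obtain ⟨δ, hδ, hmiss⟩ :=
    exists_pos_forall_exists_notMem_labels isCompact_joinFace hcont hsum hne
  obtain ⟨phase, hphase⟩ := exists_phase ι p
  refine false_of_equivariant_labelling hδ (b := fun t => ((labels Φ t).card, phase (labels Φ t)))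
    (fun t ht hnil => ?_) (fun t ht hnil => ?_) fun t _ t' hsub _ => ?_
  · simp only [labels_map (e := rotation ι p) fun v q => congrFun (hΦ v) q, Finset.card_map,
      hphase _ (labels_nonempty Φ hnil) (hmiss t ht hnil), rotation_apply]
  · exact Finset.mem_Icc.2 ⟨(labels_nonempty Φ hnil).card_pos,
      (card_le_of_forall_exists_notMem (hmiss t ht hnil)).trans hd⟩
  · rcases (labels_mono Φ hsub.subset).eq_or_ssubset with h | h
    · exact Or.inr (by simp only [h])
    · exact Or.inl (Finset.card_lt_card h)

end Zero

/-! ### The splitting theorem for a prime number of colours -/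

section Splitting

variable {d p : ℕ}

/-- The cut points of the partition of `[0, 1]` encoded by `w`: the `j`-th interval has length
`∑ a, w (j, a)`. -/
def cutPoint [NeZero p] (w : Fin (d + 1) × ZMod p → ℝ) : Fin (d + 2) → ℝ :=
  Fin.partialSum fun j => ∑ a, w (j, a)

lemma sum_fin_succ_sub_castSucc {n : ℕ} (f : Fin (n + 1) → ℝ) :
    ∑ j : Fin n, (f j.succ - f j.castSucc) = f (Fin.last n) - f 0 := by
  rw [Finset.sum_sub_distrib]
  linarith [Fin.sum_univ_succ f, Fin.sum_univ_castSucc f]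

variable [NeZero p]

lemma cutPoint_zero (w : Fin (d + 1) × ZMod p → ℝ) : cutPoint w 0 = 0 :=
  Fin.partialSum_zero _

lemma cutPoint_succ (w : Fin (d + 1) × ZMod p → ℝ) (j : Fin (d + 1)) :
    cutPoint w j.succ = cutPoint w j.castSucc + ∑ a, w (j, a) :=
  Fin.partialSum_succ _ j

lemma continuous_cutPoint (k : Fin (d + 2)) :
    Continuous fun w : Fin (d + 1) × ZMod p → ℝ => cutPoint w k := by
  induction k using Fin.induction with
  | zero => simpa only [cutPoint_zero] using continuous_const
  | succ j ih =>
    simp only [cutPoint_succ]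
    fun_prop

lemma cutPoint_rotateFun (w : Fin (d + 1) × ZMod p → ℝ) :
    cutPoint (rotateFun _ p w) = cutPoint w :=
  congrArg Fin.partialSum <| funext fun j => by
    simpa using Equiv.sum_comp (Equiv.subRight (1 : ZMod p)) fun a => w (j, a)

lemma monotone_cutPoint {w : Fin (d + 1) × ZMod p → ℝ} (hw : ∀ q, 0 ≤ w q) :
    Monotone (cutPoint w) := by
  refine Fin.monotone_iff_le_succ.2 fun j => ?_
  rw [cutPoint_succ]
  exact le_add_of_nonneg_right (Finset.sum_nonneg fun a _ => hw _)

lemma cutPoint_last (w : Fin (d + 1) × ZMod p → ℝ) :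
    cutPoint w (Fin.last (d + 1)) = ∑ q, w q := by
  have h := sum_fin_succ_sub_castSucc (cutPoint w)
  simp only [cutPoint_succ, add_sub_cancel_left, cutPoint_zero, sub_zero] at h
  rw [← h, Fintype.sum_prod_type]

variable {ι : Type*} {F : ι → ℝ → ℝ}

/-- For distribution functions `F i`, the measure of the intervals of colour `a` minus the fair
share. The intervals of other colours contribute nothing because `w (j, a) = 0` for them; this form
makes continuity in `w` evident. -/
noncomputable def excess (F : ι → ℝ → ℝ) (w : Fin (d + 1) × ZMod p → ℝ) (q : ι × ZMod p) : ℝ :=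
  ∑ j : Fin (d + 1), (F q.1 (cutPoint w j.castSucc + w (j, q.2)) - F q.1 (cutPoint w j.castSucc))
    - (F q.1 1 - F q.1 0) / p

lemma continuous_excess (hF : ∀ i, Continuous (F i)) :
    Continuous (excess (d := d) (p := p) F) := by
  have hcut := continuous_cutPoint (d := d) (p := p)
  refine continuous_pi fun q => .sub (continuous_finsetSum _ fun j _ => .sub ?_ ?_) continuous_const
  · exact (hF q.1).comp ((hcut _).add (continuous_apply _))
  · exact (hF q.1).comp (hcut _)

lemma excess_rotateFun (w : Fin (d + 1) × ZMod p → ℝ) :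
    excess F (rotateFun _ p w) = rotateFun ι p (excess F w) := by
  funext q
  simp only [excess, rotateFun_apply, cutPoint_rotateFun]

lemma excess_of_mem_joinFace {c : Fin (d + 1) → ZMod p} {w : Fin (d + 1) × ZMod p → ℝ}
    (hw : w ∈ joinFace c) (q : ι × ZMod p) :
    excess F w q = ∑ j with c j = q.2, (F q.1 (cutPoint w j.succ) - F q.1 (cutPoint w j.castSucc))
      - (F q.1 1 - F q.1 0) / p := by
  rw [excess, Finset.sum_filter]
  congr 1
  refine Finset.sum_congr rfl fun j _ => ?_
  split_ifs with h
  · rw [cutPoint_succ, sum_joinFace hw, h]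
  · rw [hw.2 (j, q.2) (Ne.symm h), add_zero, sub_self]

lemma sum_excess {c : Fin (d + 1) → ZMod p} {w : Fin (d + 1) × ZMod p → ℝ} (hw : w ∈ joinFace c)
    (i : ι) : ∑ a, excess F w (i, a) = 0 := by
  have hp : (p : ℝ) ≠ 0 := NeZero.ne _
  simp only [excess_of_mem_joinFace hw, Finset.sum_sub_distrib (f := fun _ : ZMod p => _)]
  rw [Finset.sum_fiberwise, sum_fin_succ_sub_castSucc (fun k => F i (cutPoint w k)), cutPoint_last,
    hw.1.2, cutPoint_zero, Finset.sum_const, Finset.card_univ, ZMod.card, nsmul_eq_mul,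
    mul_div_cancel₀ _ hp, sub_self]

end Splitting

/-- `F i` is the distribution function of the `i`-th measure. -/
theorem exists_fair_colouring {ι : Type*} [Fintype ι] {d p : ℕ} [Fact p.Prime]
    (hd : (p - 1) * Fintype.card ι ≤ d) {F : ι → ℝ → ℝ} (hF : ∀ i, Continuous (F i)) :
    ∃ (c : Fin (d + 1) → ZMod p) (y : Fin (d + 2) → ℝ), Monotone y ∧ y 0 = 0 ∧
      y (Fin.last (d + 1)) = 1 ∧ ∀ i a, ∑ j with c j = a, (F i (y j.succ) - F i (y j.castSucc)) =
        (F i 1 - F i 0) / p := by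
  obtain ⟨c, w, hw, hzero⟩ := exists_zero_of_equivariant hd (continuous_excess hF) excess_rotateFun
    fun c w hw => sum_excess hw
  refine ⟨c, cutPoint w, monotone_cutPoint hw.1.1, cutPoint_zero w,
    (cutPoint_last w).trans hw.1.2, fun i a => sub_eq_zero.1 ?_⟩
  rw [← excess_of_mem_joinFace hw (i, a), hzero, Pi.zero_apply]

/-! ### Step functions and their cuts -/

section Cuts

open Set Topology

variable {L : Type*} {T : Finset ℝ} {f : ℝ → L}

/-- `f` is a step function that changes its value only immediately after the points of `T`: its
pieces are half-open intervals that contain their right endpoints. -/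
def IsStepWith (T : Finset ℝ) (f : ℝ → L) : Prop :=
  ∀ ⦃u v⦄, u ≤ v → (∀ t ∈ T, t ∉ Ico u v) → f u = f v

lemma isStepWith_const (x : L) : IsStepWith ∅ fun _ => x :=
  fun _ _ _ _ => rfl

lemma IsStepWith.comp {L' : Type*} (hf : IsStepWith T f) (g : L → L') :
    IsStepWith T fun u => g (f u) :=
  fun _ _ huv hT => congrArg g (hf huv hT)

lemma IsStepWith.measurableSet_preimage (hf : IsStepWith T f) (s : Set L) :
    MeasurableSet (f ⁻¹' s) := by
  let N (u : ℝ) : ℕ := (T.filter (· < u)).card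
  have hfilter {u v : ℝ} (huv : u ≤ v) : T.filter (· < u) ⊆ T.filter (· < v) :=
    Finset.monotone_filter_right T fun t _ ht => ht.trans_le huv
  have hN : Monotone N := fun u v huv => Finset.card_le_card (hfilter huv)
  have hle {u v : ℝ} (huv : u ≤ v) (h : N u = N v) : f u = f v := by
    refine hf huv fun t ht htuv => htuv.1.not_gt ?_
    have hmem : t ∈ T.filter (· < v) := Finset.mem_filter.2 ⟨ht, htuv.2⟩
    rw [← Finset.eq_of_subset_of_card_le (hfilter huv) h.ge] at hmem
    exact (Finset.mem_filter.1 hmem).2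
  have hfactor {u v : ℝ} (h : N u = N v) : f u = f v :=
    (le_total u v).elim (fun huv => hle huv h) fun hvu => (hle hvu h.symm).symm
  have hpre : f ⁻¹' s = N ⁻¹' (N '' (f ⁻¹' s)) := by
    refine (subset_preimage_image N _).antisymm ?_
    rintro u ⟨v, hv, hvu⟩
    rwa [mem_preimage, ← hfactor hvu]
  rw [hpre]
  exact hN.measurable (MeasurableSet.of_discrete)

lemma eventually_nhdsGT_notMem_Ioo (T : Finset ℝ) (t : ℝ) :
    ∀ᶠ s in 𝓝[>] t, ∀ τ ∈ T, τ ∉ Ioo t s := by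
  refine (Filter.eventually_all_finset T).2 fun τ _ => ?_
  rcases le_or_gt τ t with h | h
  · exact .of_forall fun s hs => h.not_gt hs.1
  · filter_upwards [Ioo_mem_nhdsGT h] with s hs hτ
    exact hs.2.not_gt hτ.2

lemma IsStepWith.exists_eventually_nhdsGT_eq (hf : IsStepWith T f) (t : ℝ) :
    ∃ x, ∀ᶠ u in 𝓝[>] t, f u = x := by
  obtain ⟨s, hT, hts⟩ := ((eventually_nhdsGT_notMem_Ioo T t).and self_mem_nhdsWithin).exists
  refine ⟨f s, ?_⟩
  filter_upwards [Ioo_mem_nhdsGT hts] with u hu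
  exact hf hu.2.le fun τ hτ hus => hT τ hτ ⟨hu.1.trans_le hus.1, hus.2⟩

lemma IsStepWith.eventually_nhdsGT_eq (hf : IsStepWith T f) {t : ℝ} (ht : t ∉ T) :
    ∀ᶠ u in 𝓝[>] t, f u = f t := by
  filter_upwards [eventually_nhdsGT_notMem_Ioo T t, self_mem_nhdsWithin] with s hT hts
  refine (hf (le_of_lt hts) fun τ hτ hus => hT τ hτ ⟨lt_of_le_of_ne hus.1 ?_, hus.2⟩).symm
  rintro rfl
  exact ht hτ

lemma IsStepWith.of_insert {t : ℝ} (hf : IsStepWith (insert t T) f)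
    (ht : ∀ᶠ u in 𝓝[>] t, f u = f t) : IsStepWith T f := by
  intro u v huv hT
  by_cases htuv : t ∈ Ico u v
  · obtain ⟨s, hst, hs⟩ := (ht.and (Ioo_mem_nhdsGT htuv.2)).exists
    calc f u = f t := hf htuv.1 (Finset.forall_mem_insert _ _ _ |>.2
          ⟨fun h => h.2.false, fun τ hτ h => hT τ hτ ⟨h.1, h.2.trans htuv.2⟩⟩)
      _ = f s := hst.symm
      _ = f v := hf hs.2.le (Finset.forall_mem_insert _ _ _ |>.2
          ⟨fun h => h.1.not_gt hs.1, fun τ hτ h => hT τ hτ ⟨(htuv.1.trans hs.1.le).trans h.1, h.2⟩⟩)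
  · exact hf huv (Finset.forall_mem_insert _ _ _ |>.2 ⟨htuv, hT⟩)

lemma IsStepWith.of_union {T' : Finset ℝ} (hf : IsStepWith (T' ∪ T) f)
    (hT' : ∀ t ∈ T', t ∉ T → ∀ᶠ u in 𝓝[>] t, f u = f t) : IsStepWith T f := by
  classical
  induction T' using Finset.induction_on with
  | empty => rwa [Finset.empty_union] at hf
  | insert t T' _ ih =>
    refine ih ?_ fun τ hτ => hT' τ (Finset.mem_insert_of_mem hτ)
    rw [Finset.insert_union] at hf
    by_cases ht : t ∈ T
    · rwa [Finset.insert_eq_of_mem (Finset.mem_union_right T' ht)] at hf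
    · exact hf.of_insert (hT' t (Finset.mem_insert_self t T') ht)

variable {C : Type*} {D : ℝ → Prop} {χ : ℝ → C} {T' : Finset ℝ}

/-- The cuts of the part of `D` of colour `a`: a cut of `D` matters only if the current colour is
`a`, a cut of `χ` only if the colour before it or the colour `r` after it is `a`. -/
noncomputable def partCuts [DecidableEq C] (T T' : Finset ℝ) (χ r : ℝ → C) (a : C) : Finset ℝ :=
  T.filter (χ · = a) ∪ T'.filter (χ · = a) ∪ T'.filter (r · = a)

lemma IsStepWith.and_eq [DecidableEq C] (hD : IsStepWith T D) (hχ : IsStepWith T' χ) {r : ℝ → C}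
    (hr : ∀ t, ∀ᶠ u in 𝓝[>] t, χ u = r t) (a : C) :
    IsStepWith (partCuts T T' χ r a) fun u => D u ∧ χ u = a := by
  refine IsStepWith.of_union (T' := T ∪ T') (fun u v huv hT => ?_) fun t ht hta => ?_
  · simp only [Finset.mem_union] at hT
    rw [hD huv fun t ht => hT t (.inl (.inl ht)), hχ huv fun t ht => hT t (.inl (.inr ht))]
  · simp only [partCuts, Finset.mem_union, Finset.mem_filter] at ht hta
    have hleft : χ t ≠ a := by tauto
    have hright : ∀ᶠ u in 𝓝[>] t, χ u ≠ a := by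
      by_cases htT' : t ∈ T'
      · filter_upwards [hr t] with u hu
        rw [hu]
        tauto
      · filter_upwards [hχ.eventually_nhdsGT_eq htT'] with u hu
        rwa [hu]
    filter_upwards [hright] with u hu
    simp only [hu, hleft, and_false]

lemma sum_card_partCuts_le [DecidableEq C] [Fintype C] (T T' : Finset ℝ) (χ r : ℝ → C) :
    ∑ a, (partCuts T T' χ r a).card ≤ T.card + 2 * T'.card := by
  have hfiber (S : Finset ℝ) (g : ℝ → C) : ∑ a, (S.filter (g · = a)).card = S.card :=
    (Finset.card_eq_sum_card_fiberwise fun t _ => Finset.mem_univ (g t)).symm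
  calc ∑ a, (partCuts T T' χ r a).card
      ≤ ∑ a, ((T.filter (χ · = a)).card + (T'.filter (χ · = a)).card +
          (T'.filter (r · = a)).card) := Finset.sum_le_sum fun a _ =>
        (Finset.card_union_le _ _).trans (by gcongr; exact Finset.card_union_le _ _)
    _ = T.card + 2 * T'.card := by
        rw [Finset.sum_add_distrib, Finset.sum_add_distrib, hfiber, hfiber, hfiber]
        ring

lemma IsStepWith.exists_and_eq [Fintype C] [Nonempty C] (hD : IsStepWith T D)
    (hχ : IsStepWith T' χ) :
    ∃ (a : C) (T'' : Finset ℝ), IsStepWith T'' (fun u => D u ∧ χ u = a) ∧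
      Fintype.card C * T''.card ≤ T.card + 2 * T'.card := by
  classical
  choose r hr using hχ.exists_eventually_nhdsGT_eq
  obtain ⟨a, ha⟩ := Finite.exists_min fun a => (partCuts T T' χ r a).card
  refine ⟨a, partCuts T T' χ r a, hD.and_eq hχ hr a, le_trans ?_ (sum_card_partCuts_le T T' χ r)⟩
  simpa only [Finset.card_univ, smul_eq_mul] using
    Finset.card_nsmul_le_sum Finset.univ _ _ fun b _ => ha b

end Cuts

/-! ### Splitting measures by step functions -/

section Pieces

open Set

variable {d : ℕ} {y : Fin (d + 2) → ℝ} {u : ℝ}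

lemma exists_mem_Ioc_castSucc_succ {n : ℕ} {y : Fin (n + 1) → ℝ} (h0 : y 0 < u)
    (h1 : u ≤ y (Fin.last n)) : ∃ j : Fin n, u ∈ Ioc (y j.castSucc) (y j.succ) := by
  by_contra! h
  have hlt (k : Fin (n + 1)) : y k < u := by
    induction k using Fin.induction with
    | zero => exact h0
    | succ j ih => exact not_le.1 fun hle => h j ⟨ih, hle⟩
  exact (hlt _).not_ge h1

/-- The index of the piece `Ioc (y j.castSucc) (y j.succ)` that contains `u`: the number of interior
division points to the left of `u`. -/
noncomputable def pieceIndex (y : Fin (d + 2) → ℝ) (u : ℝ) : Fin (d + 1) :=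
  ⟨({k : Fin d | y k.succ.castSucc < u} : Finset (Fin d)).card,
    Nat.lt_succ_of_le ((Finset.card_filter_le _ _).trans_eq (Finset.card_fin d))⟩

lemma pieceIndex_eq (hy : Monotone y) {j : Fin (d + 1)}
    (hu : u ∈ Ioc (y j.castSucc) (y j.succ)) : pieceIndex y u = j := by
  have hiff (k : Fin d) : y k.succ.castSucc < u ↔ k.val < j.val := by
    refine ⟨fun h => ?_, fun h => (hy ?_).trans_lt hu.1⟩
    · by_contra hk
      exact (hu.2.trans (hy (Fin.le_def.2 (by simpa using hk)))).not_gt h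
    · exact Fin.le_def.2 (by simpa using h)
  refine Fin.ext ?_
  simp only [pieceIndex, hiff]
  rw [Fin.card_filter_val_lt, min_eq_right (Nat.lt_succ_iff.1 j.isLt)]

lemma isStepWith_pieceIndex (y : Fin (d + 2) → ℝ) :
    IsStepWith (Finset.univ.image fun k : Fin d => y k.succ.castSucc) (pieceIndex y) := by
  intro u v huv hT
  have hiff (k : Fin d) : y k.succ.castSucc < u ↔ y k.succ.castSucc < v :=
    ⟨fun h => h.trans_le huv, fun h => not_le.1 fun hle =>
      hT _ (Finset.mem_image_of_mem _ (Finset.mem_univ k)) ⟨hle, h⟩⟩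
  simp only [pieceIndex, hiff]

lemma measureReal_pieceIndex_comp_eq {C : Type*} [DecidableEq C] {ν : Measure ℝ}
    [IsFiniteMeasure ν] (hν : ∀ᵐ u ∂ν, u ∈ Ioc (y 0) (y (Fin.last (d + 1)))) (hy : Monotone y)
    (c : Fin (d + 1) → C) (a : C) :
    ν.real {u | c (pieceIndex y u) = a} =
      ∑ j with c j = a, ν.real (Ioc (y j.castSucc) (y j.succ)) := by
  have hdisj : Pairwise (Function.onFun Disjoint fun j : Fin (d + 1) =>
      Ioc (y j.castSucc) (y j.succ)) := fun j k hjk => disjoint_left.2 fun u hj hk =>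
    hjk ((pieceIndex_eq hy hj).symm.trans (pieceIndex_eq hy hk))
  rw [← measureReal_biUnion_finset (fun j _ k _ hjk => hdisj hjk) fun j _ => measurableSet_Ioc]
  refine measureReal_congr (Filter.eventuallyEq_set.2 ?_)
  filter_upwards [hν] with u hu
  obtain ⟨j, hj⟩ := exists_mem_Ioc_castSucc_succ hu.1 hu.2
  simp only [mem_iUnion₂, Finset.mem_filter_univ, exists_prop]
  refine ⟨fun h => ⟨j, by rwa [pieceIndex_eq hy hj] at h, hj⟩, ?_⟩
  rintro ⟨k, rfl, hk⟩
  rw [pieceIndex_eq hy hk]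

lemma exists_continuous_sub_eq_measureReal_Ioc (ν : Measure ℝ) [IsFiniteMeasure ν]
    [NullSingletonClass ν] :
    ∃ F : ℝ → ℝ, Continuous F ∧ ∀ u v, u ≤ v → F v - F u = ν.real (Ioc u v) := by
  have hint (u v : ℝ) : IntervalIntegrable (fun _ => (1 : ℝ)) ν u v := intervalIntegrable_const
  refine ⟨fun t => ∫ _ in (0 : ℝ)..t, (1 : ℝ) ∂ν, intervalIntegral.continuous_primitive hint 0,
    fun u v huv => ?_⟩
  rw [intervalIntegral.integral_interval_sub_left (hint _ _) (hint _ _),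
    intervalIntegral.integral_of_le huv, setIntegral_const, smul_eq_mul, mul_one]

variable {ι : Type*} [Fintype ι]

/-- Alon's necklace splitting theorem for a prime number of thieves. -/
theorem exists_isStepWith_measureReal_eq_div {p : ℕ} [Fact p.Prime] (ν : ι → Measure ℝ)
    [∀ i, IsFiniteMeasure (ν i)] [∀ i, NullSingletonClass (ν i)]
    (hν : ∀ i, ∀ᵐ u ∂ν i, u ∈ Icc 0 1) :
    ∃ (χ : ℝ → ZMod p) (T : Finset ℝ), IsStepWith T χ ∧ T.card ≤ (p - 1) * Fintype.card ι ∧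
      ∀ i a, (ν i).real {u | χ u = a} = (ν i).real univ / p := by
  choose F hF hsub using fun i => exists_continuous_sub_eq_measureReal_Ioc (ν i)
  obtain ⟨c, y, hy, hy0, hy1, hfair⟩ := exists_fair_colouring (p := p) le_rfl hF
  refine ⟨fun u => c (pieceIndex y u), _, (isStepWith_pieceIndex y).comp c,
    Finset.card_image_le.trans_eq (Finset.card_fin _), fun i a => ?_⟩
  have hν' : ∀ᵐ u ∂ν i, u ∈ Ioc 0 1 := by
    filter_upwards [hν i, (Ioc_ae_eq_Icc (μ := ν i) (a := 0) (b := 1)).mem_iff] with u hu h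
    exact h.2 hu
  have huniv : (ν i).real (Ioc 0 1) = (ν i).real univ :=
    measureReal_congr (Filter.eventuallyEq_univ.2 hν')
  rw [measureReal_pieceIndex_comp_eq (by rwa [hy0, hy1]) hy, ← huniv, ← hsub i 0 1 zero_le_one,
    ← hfair i a]
  exact Finset.sum_congr rfl fun j _ => (hsub i _ _ (hy j.castSucc_lt_succ.le)).symm

theorem IsStepWith.exists_measureReal_eq_div {T : Finset ℝ} {D : ℝ → Prop} (hD : IsStepWith T D)
    {p : ℕ} [Fact p.Prime] (μ : ι → Measure ℝ) [∀ i, IsFiniteMeasure (μ i)]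
    [∀ i, NullSingletonClass (μ i)] (hμ : ∀ i, ∀ᵐ u ∂μ i, u ∈ Icc 0 1) :
    ∃ (D' : ℝ → Prop) (T' : Finset ℝ), IsStepWith T' D' ∧
      p * T'.card ≤ T.card + 2 * ((p - 1) * Fintype.card ι) ∧
      ∀ i, (μ i).real {u | D' u} = (μ i).real {u | D u} / p := by
  obtain ⟨χ, Tχ, hχ, hcard, hfair⟩ := exists_isStepWith_measureReal_eq_div (p := p)
    (fun i => (μ i).restrict {u | D u}) fun i => ae_restrict_of_ae (hμ i)
  obtain ⟨a, T', hD', hT'⟩ := hD.exists_and_eq hχ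
  rw [ZMod.card] at hT'
  refine ⟨_, T', hD', hT'.trans (by gcongr), fun i => ?_⟩
  have hχa : MeasurableSet {u | χ u = a} := hχ.measurableSet_preimage {a}
  rw [← measureReal_restrict_apply_univ {u | D u}, ← hfair i a, measureReal_restrict_apply hχa,
    inter_comm]
  rfl

end Pieces

/-! ### Attaining the elements of `Q*` -/

section Attainable

open Set

lemma exists_strictMono_cuts (T : Finset ℝ) :
    ∃ m ≤ T.card, ∃ y : Fin (m + 2) → ℝ, StrictMono y ∧ y 0 = 0 ∧ y (Fin.last (m + 1)) = 1 ∧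
      ∀ t ∈ T, t ∈ Ioo 0 1 → t ∈ range y := by
  classical
  let S : Finset ℝ := insert 0 (insert 1 (T.filter (· ∈ Ioo 0 1)))
  have hS : S.card = (T.filter (· ∈ Ioo (0 : ℝ) 1)).card + 2 := by
    rw [Finset.card_insert_of_notMem (by simp), Finset.card_insert_of_notMem (by simp)]
  have hrange := S.range_orderEmbOfFin hS
  have hSI : ∀ t ∈ S, t ∈ Icc (0 : ℝ) 1 := by
    simp only [S, Finset.forall_mem_insert, Finset.mem_filter]
    exact ⟨by simp, by simp, fun t ht => Ioo_subset_Icc_self ht.2⟩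
  have hmem (t : ℝ) (ht : t ∈ S) : ∃ k, S.orderEmbOfFin hS k = t := by
    rwa [← mem_range, hrange]
  refine ⟨_, Finset.card_filter_le _ _, S.orderEmbOfFin hS, (S.orderEmbOfFin hS).strictMono,
    ?_, ?_, fun t ht hI => hmem t (by simp [S, ht, hI.1, hI.2])⟩
  · obtain ⟨k, hk⟩ := hmem 0 (by simp [S])
    refine le_antisymm ?_ (hSI _ (S.orderEmbOfFin_mem hS 0)).1
    exact ((S.orderEmbOfFin hS).monotone (Fin.zero_le k)).trans_eq hk
  · obtain ⟨k, hk⟩ := hmem 1 (by simp [S])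
    refine le_antisymm (hSI _ (S.orderEmbOfFin_mem hS _)).2 ?_
    exact hk.symm.trans_le ((S.orderEmbOfFin hS).monotone (Fin.le_last k))

lemma mem_biUnion_Icc_castSucc_succ_iff {d : ℕ} {y : Fin (d + 2) → ℝ} (hy : Monotone y) {u : ℝ}
    (hne : ∀ k, y k ≠ u) {j : Fin (d + 1)} (hj : u ∈ Ioc (y j.castSucc) (y j.succ))
    (S : Finset (Fin (d + 1))) : u ∈ ⋃ i ∈ S, Icc (y i.castSucc) (y i.succ) ↔ j ∈ S := by
  simp only [mem_iUnion₂, exists_prop]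
  refine ⟨?_, fun h => ⟨j, h, hj.1.le, hj.2⟩⟩
  rintro ⟨i, hi, hui⟩
  rwa [← pieceIndex_eq hy hj, pieceIndex_eq hy ⟨hui.1.lt_of_ne (hne _), hui.2⟩]

/-- The set is the union of the closed pieces whose right endpoints satisfy `D`. -/
lemma IsStepWith.exists_achievableWithCuts_ae_eq {T : Finset ℝ} {D : ℝ → Prop}
    (hD : IsStepWith T D) :
    ∃ m ≤ T.card, ∃ A, AchievableWithCuts m A ∧ ∀ (ν : Measure ℝ) [NullSingletonClass ν],
      (∀ᵐ u ∂ν, u ∈ Icc 0 1) → A =ᵐ[ν] {u | D u} := by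
  classical
  obtain ⟨m, hm, y, hy, hy0, hy1, hT⟩ := exists_strictMono_cuts T
  refine ⟨m, hm, _, ⟨y, hy.monotone, hy0, hy1,
    Finset.univ.filter fun j => D (y j.succ), rfl⟩, fun ν _ hν => ?_⟩
  refine Filter.eventuallyEq_set.2 ?_
  filter_upwards [hν, (finite_range y).measure_zero ν |> measure_eq_zero_iff_ae_notMem.1]
    with u hu hur
  have hne (k : Fin (m + 2)) : y k ≠ u := fun h => hur ⟨k, h⟩
  obtain ⟨j, hj⟩ := exists_mem_Ioc_castSucc_succ ((hy0.trans_le hu.1).lt_of_ne (hne 0))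
    (hu.2.trans_eq hy1.symm)
  have hDu : D u = D (y j.succ) := by
    refine hD hj.2 fun t ht htu => ?_
    have h0 : 0 < t := (hy0.symm.trans_le (hy.monotone (Fin.zero_le _))).trans_lt
      (hj.1.trans_le htu.1)
    have h1 : t < 1 := htu.2.trans_le ((hy.monotone (Fin.le_last _)).trans_eq hy1)
    obtain ⟨k, rfl⟩ := hT t ht ⟨h0, h1⟩
    exact (Fin.castSucc_lt_iff_succ_le.1 (hy.lt_iff_lt.1 (hj.1.trans_le htu.1))).not_gt
      (hy.lt_iff_lt.1 htu.2)
  rw [mem_biUnion_Icc_castSucc_succ_iff hy.monotone hne hj, Finset.mem_filter_univ, ← hDu]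

variable {ι : Type*} [Fintype ι] {μ : ι → Measure ℝ} {q : ℚ}

/-- Some set with at most `2 (k - 1) n / k` cuts, where `k` is the denominator of `q` and `n` the
number of measures, has measure `q` under every `μ i`. -/
def IsAttainable (μ : ι → Measure ℝ) (q : ℚ) : Prop :=
  ∃ (D : ℝ → Prop) (T : Finset ℝ), IsStepWith T D ∧
    (T.card : ℝ) ≤ 2 * ((q.den : ℝ) - 1) * Fintype.card ι / q.den ∧
    ∀ i, (μ i).real {u | D u} = q

lemma isAttainable_zero : IsAttainable μ 0 :=
  ⟨fun _ => False, ∅, isStepWith_const False, by simp, by simp⟩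

lemma den_one_sub (q : ℚ) : (1 - q).den = q.den := by
  exact_mod_cast Rat.natCast_sub_den 1 q

lemma den_div_prime {p : ℕ} (hp : p.Prime) (hpq : ¬ (p : ℤ) ∣ q.num) :
    (q / p).den = q.den * p := by
  have hcop : q.num.natAbs.Coprime (q.den * p) := by
    refine Nat.Coprime.mul_right q.reduced ?_
    rwa [Nat.coprime_comm, hp.coprime_iff_not_dvd, ← Int.natCast_dvd]
  have hpos : (0 : ℤ) < (q.den * p : ℕ) := by exact_mod_cast Nat.mul_pos q.den_pos hp.pos
  have hdiv : q / p = q.num / ((q.den * p : ℕ) : ℤ) := by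
    conv_lhs => rw [← Rat.num_div_den q]
    push_cast
    rw [div_div]
  rw [hdiv]
  exact_mod_cast Rat.den_div_eq_of_coprime hpos hcop

lemma IsAttainable.one_sub [∀ i, IsProbabilityMeasure (μ i)] (h : IsAttainable μ q) :
    IsAttainable μ (1 - q) := by
  obtain ⟨D, T, hD, hT, hq⟩ := h
  refine ⟨fun u => ¬ D u, T, hD.comp Not, by rwa [den_one_sub], fun i => ?_⟩
  have hcompl := probReal_compl_eq_one_sub (μ := μ i) (hD.measurableSet_preimage {P | P})
  change (μ i).real {u | D u}ᶜ = 1 - (μ i).real {u | D u} at hcompl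
  rw [hq i] at hcompl
  exact_mod_cast hcompl

lemma IsAttainable.div_prime [∀ i, IsFiniteMeasure (μ i)] [∀ i, NullSingletonClass (μ i)]
    (hμ : ∀ i, ∀ᵐ u ∂μ i, u ∈ Icc 0 1) (h : IsAttainable μ q) {p : ℕ} (hp : p.Prime)
    (hpq : ¬ (p : ℤ) ∣ q.num) : IsAttainable μ (q / p) := by
  have : Fact p.Prime := ⟨hp⟩
  obtain ⟨D, T, hD, hT, hq⟩ := h
  obtain ⟨D', T', hD', hT', hq'⟩ := hD.exists_measureReal_eq_div (p := p) μ hμ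
  refine ⟨D', T', hD', ?_, fun i => by rw [hq' i, hq i]; push_cast; rfl⟩
  have hp0 : (0 : ℝ) < p := mod_cast hp.pos
  have hpT' : (p : ℝ) * T'.card ≤ T.card + 2 * ((p - 1) * Fintype.card ι) := by
    rw [← Nat.cast_pred hp.pos]
    exact_mod_cast hT'
  rw [den_div_prime hp hpq]
  push_cast
  calc (T'.card : ℝ) = p * T'.card / p := (mul_div_cancel_left₀ _ hp0.ne').symm
    _ ≤ (2 * (q.den - 1) * Fintype.card ι / q.den + 2 * ((p - 1) * Fintype.card ι)) / p := by
        gcongr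
        exact hpT'.trans (by gcongr)
    _ = 2 * (q.den * p - 1) * Fintype.card ι / (q.den * p) := by
        field_simp
        ring

lemma isAttainable_of_qStar [∀ i, IsProbabilityMeasure (μ i)] [∀ i, NullSingletonClass (μ i)]
    (hμ : ∀ i, ∀ᵐ u ∂μ i, u ∈ Icc 0 1) (hq : QStar q) : IsAttainable μ q := by
  induction hq with
  | zero => exact isAttainable_zero
  | one => simpa only [sub_zero] using isAttainable_zero.one_sub
  | div q p hp _ hpq ih => exact ih.div_prime hμ hp hpq
  | one_sub_div q p hp _ hpq ih => exact (ih.div_prime hμ hp hpq).one_sub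

end Attainable

section StepMeasure

variable {μ : Measure ℝ}

lemma nullSingletonClass_of_isStepMeasure (h : IsStepMeasure μ) : NullSingletonClass μ := by
  obtain ⟨-, k, a, b, c, -, rfl⟩ := h
  exact ⟨fun x => withDensity_absolutelyContinuous _ _ (measure_singleton x)⟩

lemma ae_mem_Icc_of_isStepMeasure (h : IsStepMeasure μ) : ∀ᵐ u ∂μ, u ∈ Set.Icc 0 1 := by
  obtain ⟨-, k, a, b, c, hab, rfl⟩ := h
  rw [ae_withDensity_iff (Finset.measurable_fun_sum _ fun i _ =>
    measurable_const.indicator measurableSet_Ico)]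
  refine .of_forall fun u hu => ?_
  obtain ⟨i, -, hi⟩ := Finset.exists_ne_zero_of_sum_ne_zero hu
  have hui := Set.mem_of_indicator_ne_zero hi
  exact ⟨(hab i).1.trans hui.1, hui.2.le.trans (hab i).2⟩

end StepMeasure

end ConsensusDivision

theorem icd_upper_bound_QStar_general {α : ℚ} (hα : QStar α) {ι : Type*} [Fintype ι]
    (μ : ι → Measure ℝ) [∀ i, IsProbabilityMeasure (μ i)] [∀ i, NullSingletonClass (μ i)]
    (hμ : ∀ i, ∀ᵐ u ∂μ i, u ∈ Set.Icc 0 1) :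
    ∃ (m : ℕ) (A : Set ℝ),
      (m : ℝ) ≤ 2 * ((α.den : ℝ) - 1) * (Fintype.card ι : ℝ) / (α.den : ℝ) ∧
      AchievableWithCuts m A ∧
      ∀ i, μ i A = ENNReal.ofReal (α : ℝ) := by
  obtain ⟨D, T, hD, hT, hq⟩ := ConsensusDivision.isAttainable_of_qStar hμ hα
  obtain ⟨m, hm, A, hA, hAD⟩ := hD.exists_achievableWithCuts_ae_eq
  refine ⟨m, A, le_trans (mod_cast hm) hT, hA, fun i => ?_⟩
  rw [measure_congr (hAD (μ i) (hμ i)), ← hq i, ofReal_measureReal]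

/-- If `α = l/k ∈ Q*` (lowest terms, `k ≥ 1`, `0 ≤ l ≤ k`), then for
every `n ≥ 1` and all step-function probability measures `μ_1, ..., μ_n` on `[0,1]`,
a set achievable with at most `2(k−1)n/k` cuts exists on which every measure takes
value exactly `α`. -/
theorem icd_upper_bound_QStar
    (α : ℚ) (hQ : QStar α) (h0 : 0 ≤ α) (h1 : α ≤ 1)
    (n : ℕ) (hn : 0 < n)
    (μ : Fin n → Measure ℝ) (hμ : ∀ i, IsStepMeasure (μ i)) :
    ∃ (m : ℕ) (A : Set ℝ),
      (m : ℝ) ≤ 2 * ((α.den : ℝ) - 1) * (n : ℝ) / (α.den : ℝ) ∧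
      AchievableWithCuts m A ∧
      ∀ i, μ i A = ENNReal.ofReal (α : ℝ) := by
  have _ (i) : IsProbabilityMeasure (μ i) := (hμ i).1
  have _ (i) : NullSingletonClass (μ i) :=
    ConsensusDivision.nullSingletonClass_of_isStepMeasure (hμ i)
  simpa only [Fintype.card_fin] using icd_upper_bound_QStar_general hQ μ fun i =>
    ConsensusDivision.ae_mem_Icc_of_isStepMeasure (hμ i)
end
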